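/- Let a ∈ ℝ and let h, u be real C² functions on B₁* with Δh = 0 and Δu = ((∂h/∂x + a·y/|z|²)² + (∂h/∂y − a·x/|z|²)²)·e^{2u}, such that the holomorphic function F(z) := ∂h/∂x − i·∂h/∂y has finite order N at 0; set n := N if a = 0 and n := min(−1, N) otherwise. Suppose there exist β ∈ ℤ with β < n+1 and a constant c such that u(z) + β·log|z| → c as z → 0 (a conical singularity of integer order). Let ω_∇ = M_r dr + M_θ dθ be the connection form determined by (h,u,a), and for r ∈ (0,1) let Φ_r : [0,2π] → M₂(ℝ) solve Φ_r'(s) = −M_θ(r e^{is})·Φ_r(s), Φ_r(0) = 𝟙. Then for every r ∈ (0,1) the holonomy Φ_r(2π) equals (−1)^β·𝟙, i.e. it is the identity if β is even and minus the identity if β is odd. -/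

import Mathlib

open Complex Real Set Topology Filter Matrix

/-- Partial derivative in the `x`-direction of a function on `ℂ ≅ ℝ²`. -/
noncomputable def pdx (f : ℂ → ℝ) (z : ℂ) : ℝ := deriv (fun t : ℝ => f (z + t)) 0

/-- Partial derivative in the `y`-direction. -/
noncomputable def pdy (f : ℂ → ℝ) (z : ℂ) : ℝ := deriv (fun t : ℝ => f (z + t * Complex.I)) 0

/-- The flat Laplacian `Δ = ∂²/∂x² + ∂²/∂y²`. -/
noncomputable def lap (f : ℂ → ℝ) (z : ℂ) : ℝ := pdx (pdx f) z + pdy (pdy f) z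

/-- The punctured open unit disc `B₁* = {0 < |z| < 1}`. -/
def PDisc : Set ℂ := {z : ℂ | 0 < ‖z‖ ∧ ‖z‖ < 1}

/-- Radial derivative `∂f/∂r` expressed in Cartesian coordinates. -/
noncomputable def pdr (f : ℂ → ℝ) (z : ℂ) : ℝ :=
  (z.re * pdx f z + z.im * pdy f z) / ‖z‖

/-- Angular derivative `∂f/∂θ` expressed in Cartesian coordinates. -/
noncomputable def pdθ (f : ℂ → ℝ) (z : ℂ) : ℝ :=
  -z.im * pdx f z + z.re * pdy f z

/-- `ω₁₁(∂_r)` where `2ω₁₁ = e^u (dh − a dθ) − du`. -/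
noncomputable def ω11r (h u : ℂ → ℝ) (a : ℝ) (z : ℂ) : ℝ :=
  (Real.exp (u z) * pdr h z - pdr u z) / 2

/-- `ω₁₁(∂_θ)`. -/
noncomputable def ω11θ (h u : ℂ → ℝ) (a : ℝ) (z : ℂ) : ℝ :=
  (Real.exp (u z) * (pdθ h z - a) - pdθ u z) / 2

/-- `ω₂₂(∂_r)` where `2ω₂₂ = −e^u (dh − a dθ) − du`. -/
noncomputable def ω22r (h u : ℂ → ℝ) (a : ℝ) (z : ℂ) : ℝ :=
  -(Real.exp (u z) * pdr h z + pdr u z) / 2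

/-- `ω₂₂(∂_θ)`. -/
noncomputable def ω22θ (h u : ℂ → ℝ) (a : ℝ) (z : ℂ) : ℝ :=
  -(Real.exp (u z) * (pdθ h z - a) + pdθ u z) / 2

/-- The `dθ`-component `M_θ` of the connection form `ω_∇ = M_r dr + M_θ dθ`. -/
noncomputable def Mθ (h u : ℂ → ℝ) (a : ℝ) (z : ℂ) : Matrix (Fin 2) (Fin 2) ℝ :=
  !![ω11θ h u a z, -‖z‖ * ω11r h u a z;
     ‖z‖ * ω22r h u a z, ω22θ h u a z]

/-- The `dr`-component `M_r` of the connection form. -/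
noncomputable def Mr (h u : ℂ → ℝ) (a : ℝ) (z : ℂ) : Matrix (Fin 2) (Fin 2) ℝ :=
  !![ω11r h u a z, ω11θ h u a z / ‖z‖;
     -ω22θ h u a z / ‖z‖, ω22r h u a z]

/-!
Pulled back by `exp`, the structure is a flat connection `T dt + S ds` on the left half-plane in the
coordinate `ζ = t + i s`, periodic in `s`. Flatness and periodicity give the monodromy `H t` along
`s ∈ [0, 2π]` the equation `H' = [T, H]`. In terms of `w ↦ p w + q w̄`, the squared distance of `H`
from a homothety then satisfies a linear differential inequality whose coefficient is a multiple of
`‖κ‖`, where `κ = e^u ∂h` with the contribution of `a` included. The bound `β < n + 1` gives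
`‖κ‖ = O(e^t)`, which is integrable at `-∞`, so `H t = (-1) ^ β` for all `t` as soon as `H`
comes close to `(-1) ^ β` along some sequence `t → -∞`. There `κ` is negligible and the parallel
transport is a rotation by half the flux of `∂u/∂t`. Since the integral of `u + β t` over
`s ∈ [0, 2π]` converges, its derivative, which is the flux plus `2πβ`, becomes arbitrarily small
along a sequence.
-/

open scoped ComplexConjugate

section RealLinearMaps

/-- The real-linear map `w ↦ p w + q w̄` of the complex plane. -/
noncomputable def realLin (p q : ℂ) : ℂ →L[ℝ] ℂ :=
  p • (1 : ℂ →L[ℝ] ℂ) + q • (conjCLE : ℂ →L[ℝ] ℂ)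

/-- The coefficient `p` of a real-linear map `w ↦ p w + q w̄`. -/
noncomputable def linPart (L : ℂ →L[ℝ] ℂ) : ℂ := (L 1 - I * L I) / 2

/-- The coefficient `q` of a real-linear map `w ↦ p w + q w̄`. -/
noncomputable def antilinPart (L : ℂ →L[ℝ] ℂ) : ℂ := (L 1 + I * L I) / 2

@[simp]
theorem realLin_apply (p q w : ℂ) : realLin p q w = p * w + q * conj w := by
  simp [realLin]

@[simp]
theorem linPart_realLin (p q : ℂ) : linPart (realLin p q) = p := by
  simp only [linPart, realLin_apply, map_one, conj_I]
  linear_combination -p / 2 * I_sq + q / 2 * I_sq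

@[simp]
theorem antilinPart_realLin (p q : ℂ) : antilinPart (realLin p q) = q := by
  simp only [antilinPart, realLin_apply, map_one, conj_I]
  linear_combination p / 2 * I_sq - q / 2 * I_sq

theorem realLin_linPart_antilinPart (L : ℂ →L[ℝ] ℂ) : realLin (linPart L) (antilinPart L) = L := by
  ext w
  have hL : L w = w.re * L 1 + w.im * L I := by
    have hw : w = w.re • (1 : ℂ) + w.im • I := by simp [re_add_im]
    conv_lhs => rw [hw, map_add, map_smul, map_smul, real_smul, real_smul]
  rw [realLin_apply, linPart, antilinPart, hL, re_eq_add_conj, im_eq_sub_conj]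
  field_simp
  linear_combination (-L I * w + L I * conj w) * I_sq

theorem realLin_sub (p q p' q' : ℂ) :
    realLin p q - realLin p' q' = realLin (p - p') (q - q') := by
  ext w
  simp only [_root_.sub_apply, realLin_apply]
  ring

theorem realLin_mul (p q p' q' : ℂ) :
    realLin p q * realLin p' q' = realLin (p * p' + q * conj q') (p * q' + q * conj p') := by
  ext w
  simp only [mul_apply_eq_comp, realLin_apply, map_add, map_mul, conj_conj]
  ring

variable {E : Type*} [NormedAddCommGroup E] [NormedSpace ℝ E] {P Q : E → ℂ} {x : E}

theorem contDiffAt_realLin {n : WithTop ℕ∞} (hP : ContDiffAt ℝ n P x) (hQ : ContDiffAt ℝ n Q x) :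
    ContDiffAt ℝ n (fun x => realLin (P x) (Q x)) x :=
  (hP.smul contDiffAt_const).add (hQ.smul contDiffAt_const)

theorem fderiv_realLin (hP : DifferentiableAt ℝ P x) (hQ : DifferentiableAt ℝ Q x) (v : E) :
    fderiv ℝ (fun x => realLin (P x) (Q x)) x v = realLin (fderiv ℝ P x v) (fderiv ℝ Q x v) := by
  have hPQ : HasFDerivAt (fun x => realLin (P x) (Q x)) _ x :=
    (hP.hasFDerivAt.smul_const (1 : ℂ →L[ℝ] ℂ)).add
      (hQ.hasFDerivAt.smul_const (conjCLE : ℂ →L[ℝ] ℂ))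
  rw [hPQ.fderiv]
  rfl

end RealLinearMaps

section Wirtinger

/-- The Wirtinger derivative `∂f/∂z = (f_x - i f_y) / 2` of a real function; it encodes the
differential through `df(w) = 2 Re (∂f/∂z · w)`. -/
noncomputable def dz (f : ℂ → ℝ) (z : ℂ) : ℂ := (pdx f z - pdy f z * I) / 2

/-- The Wirtinger derivative `∂F/∂z̄ = (F_x + i F_y) / 2` of a complex function. -/
noncomputable def dzbar (F : ℂ → ℂ) (z : ℂ) : ℂ := antilinPart (fderiv ℝ F z)

variable {f : ℂ → ℝ} {F φ : ℂ → ℂ} {φ' z : ℂ}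

theorem pdx_eq_fderiv (hf : DifferentiableAt ℝ f z) : pdx f z = fderiv ℝ f z 1 := by
  have hline : HasDerivAt (fun t : ℝ => z + t) 1 0 := by
    simpa using (ofRealCLM.hasDerivAt (x := 0)).const_add z
  exact (hf.hasFDerivAt.comp_hasDerivAt_of_eq 0 hline (by simp)).deriv

theorem pdy_eq_fderiv (hf : DifferentiableAt ℝ f z) : pdy f z = fderiv ℝ f z I := by
  have hline : HasDerivAt (fun t : ℝ => z + t * I) I 0 := by
    simpa using ((ofRealCLM.hasDerivAt (x := 0)).mul_const I).const_add z
  exact (hf.hasFDerivAt.comp_hasDerivAt_of_eq 0 hline (by simp)).deriv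

theorem fderiv_eq_two_mul_re_dz_mul (hf : DifferentiableAt ℝ f z) (w : ℂ) :
    fderiv ℝ f z w = 2 * (dz f z * w).re := by
  have hw : w = w.re • (1 : ℂ) + w.im • I := by simp [re_add_im]
  conv_lhs => rw [hw, map_add, map_smul, map_smul]
  simp only [dz, ← pdx_eq_fderiv hf, ← pdy_eq_fderiv hf, smul_eq_mul, mul_re, div_ofNat_re,
    div_ofNat_im, sub_re, sub_im, mul_im, ofReal_re, ofReal_im, I_re, I_im]
  ring

theorem dz_eq_fderiv (hf : DifferentiableAt ℝ f z) :
    dz f z = (fderiv ℝ f z 1 - fderiv ℝ f z I * I) / 2 := by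
  rw [dz, pdx_eq_fderiv hf, pdy_eq_fderiv hf]

theorem dz_comp (hf : DifferentiableAt ℝ f (φ z)) (hφ : HasDerivAt φ φ' z) :
    dz (f ∘ φ) z = dz f (φ z) * φ' := by
  have hφℝ := hφ.hasFDerivAt.restrictScalars ℝ
  have hcomp := hf.hasFDerivAt.comp z hφℝ
  rw [dz_eq_fderiv hcomp.differentiableAt, hcomp.fderiv]
  simp only [ContinuousLinearMap.comp_apply, fderiv_eq_two_mul_re_dz_mul hf]
  apply Complex.ext
  · simp
  · simp only [ContinuousLinearMap.coe_restrictScalars', ContinuousLinearMap.toSpanSingleton_apply,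
      smul_eq_mul, one_mul, mul_re, ofReal_mul, ofReal_ofNat, ofReal_sub, I_re, zero_mul, I_im,
      zero_sub, mul_neg, mul_im, zero_add, ofReal_neg, div_ofNat_im, sub_im, re_ofNat, ofReal_re,
      ofReal_im, mul_zero, add_zero, sub_self, im_ofNat, sub_re, sub_zero, neg_re, neg_im, neg_zero,
      mul_one]
    ring

theorem pdx_eventuallyEq (hf : ContDiffAt ℝ 2 f z) : pdx f =ᶠ[𝓝 z] fun w => fderiv ℝ f w 1 :=
  (hf.eventually (by simp)).mono fun _ hw => pdx_eq_fderiv (hw.differentiableAt (by simp))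

theorem pdy_eventuallyEq (hf : ContDiffAt ℝ 2 f z) : pdy f =ᶠ[𝓝 z] fun w => fderiv ℝ f w I :=
  (hf.eventually (by simp)).mono fun _ hw => pdy_eq_fderiv (hw.differentiableAt (by simp))

theorem contDiffAt_dz (hf : ContDiffAt ℝ 2 f z) : ContDiffAt ℝ 1 (dz f) z := by
  have hf' : ContDiffAt ℝ 1 (fderiv ℝ f) z := hf.fderiv_right (by norm_num)
  have hx : ContDiffAt ℝ 1 (fun w => (pdx f w : ℂ)) z := ofRealCLM.contDiff.contDiffAt.comp z
    ((hf'.clm_apply contDiffAt_const).congr_of_eventuallyEq (pdx_eventuallyEq hf))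
  have hy : ContDiffAt ℝ 1 (fun w => (pdy f w : ℂ)) z := ofRealCLM.contDiff.contDiffAt.comp z
    ((hf'.clm_apply contDiffAt_const).congr_of_eventuallyEq (pdy_eventuallyEq hf))
  exact (hx.sub (hy.mul contDiffAt_const)).div_const 2

theorem lap_eq_four_mul_dzbar_dz (hf : ContDiffAt ℝ 2 f z) :
    (lap f z : ℂ) = 4 * dzbar (dz f) z := by
  have hf' : HasFDerivAt (fderiv ℝ f) (fderiv ℝ (fderiv ℝ f) z) z :=
    ((hf.fderiv_right (m := 1) (by norm_num)).differentiableAt (by simp)).hasFDerivAt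
  have hpdx : HasFDerivAt (pdx f) ((fderiv ℝ (fderiv ℝ f) z).flip 1) z := by
    simpa using (hf'.clm_apply (hasFDerivAt_const 1 z)).congr_of_eventuallyEq (pdx_eventuallyEq hf)
  have hpdy : HasFDerivAt (pdy f) ((fderiv ℝ (fderiv ℝ f) z).flip I) z := by
    simpa using (hf'.clm_apply (hasFDerivAt_const I z)).congr_of_eventuallyEq (pdy_eventuallyEq hf)
  have hsymm : fderiv ℝ (fderiv ℝ f) z 1 I = fderiv ℝ (fderiv ℝ f) z I 1 :=
    (hf.isSymmSndFDerivAt (by simp)).eq 1 I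
  have hdz : HasFDerivAt (dz f) _ z :=
    ((ofRealCLM.hasFDerivAt.comp z hpdx).sub
      ((ofRealCLM.hasFDerivAt.comp z hpdy).mul_const I)).mul_const (2⁻¹ : ℂ)
  rw [lap, pdx_eq_fderiv hpdx.differentiableAt, pdy_eq_fderiv hpdy.differentiableAt, hpdx.fderiv,
    hpdy.fderiv, dzbar, hdz.fderiv]
  apply Complex.ext
  · simp only [ContinuousLinearMap.flip_apply, ofReal_add, add_re, ofReal_re, antilinPart,
      _root_.smul_apply, _root_.sub_apply, ContinuousLinearMap.comp_apply, ofRealCLM_apply,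
      smul_eq_mul, mul_re, re_ofNat, div_ofNat_re, inv_re, normSq_ofNat, div_self_mul_self', sub_re,
      I_re, zero_mul, I_im, ofReal_im, mul_zero, sub_self, sub_zero, inv_im, im_ofNat, neg_zero,
      zero_div, sub_im, mul_im, one_mul, zero_add, zero_sub, mul_neg, add_zero, sub_neg_eq_add,
      div_ofNat_im, add_im]
    ring
  · simp [antilinPart, hsymm]

theorem dzbar_comp (hF : DifferentiableAt ℝ F (φ z)) (hφ : HasDerivAt φ φ' z) :
    dzbar (F ∘ φ) z = dzbar F (φ z) * conj φ' := by
  have hφℝ := hφ.hasFDerivAt.restrictScalars ℝ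
  have hφ' : ContinuousLinearMap.restrictScalars ℝ (ContinuousLinearMap.toSpanSingleton ℂ φ') =
      realLin φ' 0 := by
    ext
    simp [mul_comm]
  rw [dzbar, (hF.hasFDerivAt.comp z hφℝ).fderiv, hφ',
    ← realLin_linPart_antilinPart (fderiv ℝ F (φ z)), ← ContinuousLinearMap.mul_def, realLin_mul,
    antilinPart_realLin, mul_zero, zero_add, dzbar]

theorem dzbar_mul {G : ℂ → ℂ} (hF : DifferentiableAt ℝ F z) (hG : DifferentiableAt ℝ G z) :
    dzbar (F * G) z = dzbar F z * G z + F z * dzbar G z := by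
  rw [dzbar, (hF.hasFDerivAt.mul hG.hasFDerivAt).fderiv, dzbar, dzbar]
  simp only [antilinPart, _root_.add_apply, _root_.smul_apply, smul_eq_mul]
  ring

theorem dzbar_eq_zero (hF : DifferentiableAt ℂ F z) : dzbar F z = 0 := by
  rw [dzbar, (hF.hasDerivAt.hasFDerivAt.restrictScalars ℝ).fderiv]
  simp [antilinPart, ← mul_assoc]

theorem dzbar_exp_ofReal (hf : DifferentiableAt ℝ f z) :
    dzbar (fun w => (Real.exp (f w) : ℂ)) z = Real.exp (f z) * conj (dz f z) := by
  have hexp : HasFDerivAt (fun w => (Real.exp (f w) : ℂ)) _ z :=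
    ofRealCLM.hasFDerivAt.comp z hf.hasFDerivAt.exp
  rw [dzbar, hexp.fderiv, dz_eq_fderiv hf]
  simp only [antilinPart, ContinuousLinearMap.comp_smulₛₗ, ringHom_apply, _root_.smul_apply,
    ContinuousLinearMap.comp_apply, ofRealCLM_apply, real_smul, ofReal_exp, map_div₀, map_sub,
    conj_ofReal, map_mul, conj_I, mul_neg, sub_neg_eq_add, map_ofNat]
  ring

end Wirtinger

section UniformDifferentiability

variable {E F : Type*} [NormedAddCommGroup E] [NormedSpace ℝ E] [NormedAddCommGroup F]
  [NormedSpace ℝ F] {f : E → F} {K : Set E} {ε : ℝ}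

theorem eventually_norm_sub_sub_fderiv_le {x : E} (hf : ContDiffAt ℝ 1 f x) (hε : 0 < ε) :
    ∀ᶠ p : E × E in 𝓝 (0, x), ‖f (p.2 + p.1) - f p.2 - fderiv ℝ f p.2 p.1‖ ≤ ε * ‖p.1‖ := by
  have hstrict : ∀ᶠ p : E × E in 𝓝 (0, x),
      ‖f (p.2 + p.1) - f p.2 - fderiv ℝ f x p.1‖ ≤ ε / 2 * ‖p.1‖ := by
    have htendsto : Tendsto (fun p : E × E => (p.2 + p.1, p.2)) (𝓝 (0, x)) (𝓝 (x, x)) :=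
      Continuous.tendsto' (by fun_prop) _ _ (by simp)
    simpa using htendsto.eventually ((hf.hasStrictFDerivAt (by simp)).isLittleO.def (half_pos hε))
  have hcont : ∀ᶠ p : E × E in 𝓝 (0, x), ‖fderiv ℝ f x - fderiv ℝ f p.2‖ < ε / 2 := by
    have hdist := (hf.continuousAt_fderiv (by simp)).eventually
      (Metric.ball_mem_nhds _ (half_pos hε))
    filter_upwards [(continuous_snd.tendsto ((0 : E), x)).eventually hdist] with p hp
    rwa [← dist_eq_norm, dist_comm]
  filter_upwards [hstrict, hcont] with p hp hp'
  calc ‖f (p.2 + p.1) - f p.2 - fderiv ℝ f p.2 p.1‖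
      = ‖(f (p.2 + p.1) - f p.2 - fderiv ℝ f x p.1) + (fderiv ℝ f x - fderiv ℝ f p.2) p.1‖ := by
        rw [_root_.sub_apply, sub_add_sub_cancel]
    _ ≤ ε / 2 * ‖p.1‖ + ε / 2 * ‖p.1‖ :=
        norm_add_le_of_le hp (ContinuousLinearMap.le_of_opNorm_le _ hp'.le _)
    _ = ε * ‖p.1‖ := by ring

theorem eventually_forall_norm_sub_sub_fderiv_le (hK : IsCompact K)
    (hf : ∀ x ∈ K, ContDiffAt ℝ 1 f x) (hε : 0 < ε) :
    ∀ᶠ v in 𝓝 0, ∀ x ∈ K, ‖f (x + v) - f x - fderiv ℝ f x v‖ ≤ ε * ‖v‖ :=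
  hK.eventually_forall_of_forall_eventually fun x hx =>
    eventually_norm_sub_sub_fderiv_le (hf x hx) hε

end UniformDifferentiability

section VariationalEquation

variable {E : Type*} [NormedAddCommGroup E] [NormedSpace ℝ E]

theorem gronwallBound_zero_left (K ε x : ℝ) :
    gronwallBound 0 K ε x = ε * gronwallBound 0 K 1 x := by
  rcases eq_or_ne K 0 with rfl | hK
  · simp [gronwallBound_K0]
  · simp only [gronwallBound_of_K_ne_0 hK]
    ring

theorem norm_le_mul_gronwallBound_of_eq_zero {f f' : ℝ → E} {K ε a b : ℝ} (hab : a ≤ b)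
    (hf : ∀ x ∈ Icc a b, HasDerivAt f (f' x) x) (ha : f a = 0)
    (bound : ∀ x ∈ Icc a b, ‖f' x‖ ≤ K * ‖f x‖ + ε) :
    ‖f b‖ ≤ ε * gronwallBound 0 K 1 (b - a) := by
  rw [← gronwallBound_zero_left]
  exact norm_le_gronwallBound_of_norm_deriv_right_le
    (fun x hx => (hf x hx).continuousAt.continuousWithinAt)
    (fun x hx => (hf x (Ico_subset_Icc_self hx)).hasDerivWithinAt) (by simp [ha])
    (fun x hx => bound x (Ico_subset_Icc_self hx)) b (right_mem_Icc.2 hab)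

variable {𝔸 : Type*} [NormedRing 𝔸] [NormedAlgebra ℝ 𝔸]

/-- A solution of the linear equation `φ' = A φ` starting at the identity. -/
structure IsFundamentalSolution (A φ : ℝ → 𝔸) : Prop where
  map_zero : φ 0 = 1
  hasDerivAt : ∀ s, HasDerivAt φ (A s * φ s) s

theorem IsFundamentalSolution.hasDerivAt_apply {A φ : ℝ → E →L[ℝ] E}
    (hφ : IsFundamentalSolution A φ) (v : E) (s : ℝ) :
    HasDerivAt (fun s => φ s v) (A s (φ s v)) s := by
  simpa using (hφ.hasDerivAt s).clm_apply (hasDerivAt_const s v)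

theorem norm_variation_le {A₀ A₁ A' x v : 𝔸} {η τ M M' X V : ℝ} (y : 𝔸)
    (hA : ‖A₁ - A₀ - τ • A'‖ ≤ η * |τ|) (hτ : |τ| ≤ η) (hη : η ≤ 1)
    (hA₀ : ‖A₀‖ ≤ M) (hA' : ‖A'‖ ≤ M') (hx : ‖x‖ ≤ X) (hv : ‖v‖ ≤ V) :
    ‖A₁ * y - A₀ * x - τ • (A₀ * v + A' * x)‖ ≤
      (M + M' + 1) * ‖y - x - τ • v‖ + η * |τ| * (X + (M' + 1) * V) := by
  have hM' : 0 ≤ M' := (norm_nonneg _).trans hA'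
  have hdiff : ‖A₁ - A₀‖ ≤ (M' + 1) * |τ| := by
    calc ‖A₁ - A₀‖ = ‖(A₁ - A₀ - τ • A') + τ • A'‖ := by rw [sub_add_cancel]
      _ ≤ η * |τ| + |τ| * M' := norm_add_le_of_le hA ((norm_smul_le _ _).trans (by gcongr; simp))
      _ ≤ (M' + 1) * |τ| := by nlinarith [abs_nonneg τ]
  have hA₁ : ‖A₁‖ ≤ M + M' + 1 := by
    calc ‖A₁‖ = ‖A₀ + (A₁ - A₀)‖ := by rw [add_sub_cancel]
      _ ≤ M + (M' + 1) * |τ| := norm_add_le_of_le hA₀ hdiff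
      _ ≤ M + M' + 1 := by nlinarith
  have hsplit : A₁ * y - A₀ * x - τ • (A₀ * v + A' * x) =
      A₁ * (y - x - τ • v) + ((A₁ - A₀ - τ • A') * x + (A₁ - A₀) * (τ • v)) := by
    simp only [mul_sub, sub_mul, smul_add, mul_smul_comm, smul_mul_assoc]
    module
  have hv' : ‖τ • v‖ ≤ η * V := by
    rw [norm_smul, Real.norm_eq_abs]
    gcongr
    exact (abs_nonneg τ).trans hτ
  rw [hsplit]
  refine (norm_add_le_of_le (norm_mul_le_of_le hA₁ le_rfl) (norm_add_le_of_le
    (norm_mul_le_of_le hA hx) (norm_mul_le_of_le hdiff hv'))).trans_eq ?_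
  ring

theorem hasDerivAt_of_variational_equation {A x : ℝ → ℝ → 𝔸} {A' v : ℝ → 𝔸} {t₀ b : ℝ}
    (hb : 0 ≤ b) (hA : ContinuousOn (A t₀) (Icc 0 b)) (hA' : ContinuousOn A' (Icc 0 b))
    (hdiff : ∀ ε > 0, ∀ᶠ t in 𝓝 t₀, ∀ s ∈ Icc 0 b,
      ‖A t s - A t₀ s - (t - t₀) • A' s‖ ≤ ε * |t - t₀|)
    (hx : ∀ᶠ t in 𝓝 t₀, IsFundamentalSolution (A t) (x t))
    (hv : ∀ s ∈ Icc 0 b, HasDerivAt v (A t₀ s * v s + A' s * x t₀ s) s) (hv₀ : v 0 = 0) :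
    HasDerivAt (fun t => x t b) (v b) t₀ := by
  have hx₀ := hx.self_of_nhds
  obtain ⟨M, hM⟩ := isCompact_Icc.exists_bound_of_continuousOn hA
  obtain ⟨M', hM'⟩ := isCompact_Icc.exists_bound_of_continuousOn hA'
  obtain ⟨X, hX⟩ := isCompact_Icc.exists_bound_of_continuousOn
    (fun s (_ : s ∈ Icc 0 b) => (hx₀.hasDerivAt s).continuousAt.continuousWithinAt)
  obtain ⟨V, hV⟩ := isCompact_Icc.exists_bound_of_continuousOn
    (fun s hs => (hv s hs).continuousAt.continuousWithinAt)
  set D := (X + (M' + 1) * V) * gronwallBound 0 (M + M' + 1) 1 (b - 0)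
  have hremainder : ∀ η > 0, η ≤ 1 → ∀ᶠ t in 𝓝 t₀,
      ‖x t b - x t₀ b - (t - t₀) • v b‖ ≤ η * |t - t₀| * D := by
    intro η hη hη1
    filter_upwards [hdiff η hη, hx, Metric.ball_mem_nhds t₀ hη] with t ht hxt htη
    rw [← mul_assoc]
    refine norm_le_mul_gronwallBound_of_eq_zero (f := fun s => x t s - x t₀ s - (t - t₀) • v s) hb
      (fun s hs => ((hxt.hasDerivAt s).sub (hx₀.hasDerivAt s)).sub ((hv s hs).fun_const_smul _))
      (by simp [hxt.map_zero, hx₀.map_zero, hv₀]) fun s hs => ?_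
    exact norm_variation_le _ (ht s hs) (Metric.mem_ball.1 htη).le hη1 (hM s hs) (hM' s hs)
      (hX s hs) (hV s hs)
  rw [hasDerivAt_iff_isLittleO, Asymptotics.isLittleO_iff]
  intro ε hε
  have hη : 0 < min 1 (ε / (|D| + 1)) := by positivity
  filter_upwards [hremainder _ hη (min_le_left _ _)] with t ht
  refine ht.trans ?_
  rw [Real.norm_eq_abs, mul_right_comm]
  gcongr
  calc min 1 (ε / (|D| + 1)) * D ≤ ε / (|D| + 1) * (|D| + 1) := by
        refine (mul_le_mul_of_nonneg_left ?_ hη.le).trans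
          (mul_le_mul_of_nonneg_right (min_le_right _ _) (by positivity))
        linarith [le_abs_self D]
    _ = ε := by field_simp

end VariationalEquation

section Holonomy

variable {E : Type*} [NormedAddCommGroup E] [NormedSpace ℝ E] {F : ℂ → E} {t s : ℝ}

theorem hasDerivAt_vertical (hF : DifferentiableAt ℝ F (t + s * I)) :
    HasDerivAt (fun s : ℝ => F (t + s * I)) (fderiv ℝ F (t + s * I) I) s := by
  have hline : HasDerivAt (fun s : ℝ => (t : ℂ) + s * I) I s := by
    simpa using ((ofRealCLM.hasDerivAt (x := s)).mul_const I).const_add (t : ℂ)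
  exact hF.hasFDerivAt.comp_hasDerivAt s hline

theorem eventually_forall_norm_horizontal_sub_le {b ε : ℝ}
    (hF : ∀ s ∈ Icc 0 b, ContDiffAt ℝ 1 F (t + s * I)) (hε : 0 < ε) :
    ∀ᶠ t' : ℝ in 𝓝 t, ∀ s ∈ Icc 0 b,
      ‖F (t' + s * I) - F (t + s * I) - (t' - t) • fderiv ℝ F (t + s * I) 1‖ ≤ ε * |t' - t| := by
  have hK : IsCompact ((fun s : ℝ => (t : ℂ) + s * I) '' Icc 0 b) :=
    isCompact_Icc.image (by fun_prop)
  have hshift : Tendsto (fun t' : ℝ => ((t' - t : ℝ) : ℂ)) (𝓝 t) (𝓝 0) :=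
    Continuous.tendsto' (by fun_prop) _ _ (by simp)
  filter_upwards [hshift.eventually (eventually_forall_norm_sub_sub_fderiv_le hK
    (forall_mem_image.2 hF) hε)] with t' ht' s hs
  have hpoint : (t : ℂ) + s * I + ((t' - t : ℝ) : ℂ) = t' + s * I := by
    push_cast
    ring
  have hdir : ((t' - t : ℝ) : ℂ) = (t' - t) • (1 : ℂ) := by simp
  have h := ht' _ (mem_image_of_mem _ hs)
  rwa [hpoint, hdir, map_smul, ← hdir, norm_real] at h

variable {𝔸 : Type*} [NormedRing 𝔸] [NormedAlgebra ℝ 𝔸] {S T : ℂ → 𝔸} {φ : ℝ → ℝ → 𝔸} {b : ℝ}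

/- For a flat connection the horizontal coefficient `T` transports the parallel frame `φ t` of the
vertical direction, so `T φ - φ T(t)` solves the variational equation of `φ`. -/
theorem hasDerivAt_holonomy (hb : 0 ≤ b) (hS : ∀ s ∈ Icc 0 b, ContDiffAt ℝ 1 S (t + s * I))
    (hT : ∀ s ∈ Icc 0 b, DifferentiableAt ℝ T (t + s * I))
    (hflat : ∀ s ∈ Icc 0 b, fderiv ℝ S (t + s * I) 1 + S (t + s * I) * T (t + s * I) =
      fderiv ℝ T (t + s * I) I + T (t + s * I) * S (t + s * I))
    (hφ : ∀ᶠ t' : ℝ in 𝓝 t, IsFundamentalSolution (fun s => S (t' + s * I)) (φ t')) :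
    HasDerivAt (fun t => φ t b) (T (t + b * I) * φ t b - φ t b * T t) t := by
  have hφt := hφ.self_of_nhds
  have hline : Continuous fun s : ℝ => (t : ℂ) + s * I := by fun_prop
  refine hasDerivAt_of_variational_equation (v := fun s => T (t + s * I) * φ t s - φ t s * T t)
    (A := fun t s => S (t + s * I)) (A' := fun s => fderiv ℝ S (t + s * I) 1) hb
    (fun s hs => ?_) (fun s hs => ?_) (fun ε hε => eventually_forall_norm_horizontal_sub_le hS hε)
    hφ (fun s hs => ?_) ?_
  · exact ((hS s hs).continuousAt.comp_of_eq hline.continuousAt rfl).continuousWithinAt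
  · exact ((((hS s hs).continuousAt_fderiv (by simp)).comp_of_eq hline.continuousAt rfl).clm_apply
      continuousAt_const).continuousWithinAt
  · have hflatφ := congrArg (· * φ t s) (hflat s hs)
    simp only [add_mul] at hflatφ
    refine (((hasDerivAt_vertical (hT s hs)).mul (hφt.hasDerivAt s)).sub
      ((hφt.hasDerivAt s).mul_const (T t))).congr_deriv ?_
    rw [← mul_assoc (T _), ← hflatφ]
    noncomm_ring
  · simp [hφt.map_zero]

end Holonomy

section CommutatorEquation

theorem norm_linPart_le (L : ℂ →L[ℝ] ℂ) : ‖linPart L‖ ≤ ‖L‖ := by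
  have h1 : ‖L 1‖ ≤ ‖L‖ := L.unit_le_opNorm 1 (by simp)
  have hI : ‖L I‖ ≤ ‖L‖ := L.unit_le_opNorm I (by simp)
  have h : ‖L 1 - I * L I‖ ≤ ‖L‖ + ‖L‖ := norm_sub_le_of_le h1 (by simpa using hI)
  rw [linPart, norm_div, Complex.norm_ofNat]
  linarith

theorem norm_antilinPart_le (L : ℂ →L[ℝ] ℂ) : ‖antilinPart L‖ ≤ ‖L‖ := by
  have h1 : ‖L 1‖ ≤ ‖L‖ := L.unit_le_opNorm 1 (by simp)
  have hI : ‖L I‖ ≤ ‖L‖ := L.unit_le_opNorm I (by simp)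
  have h : ‖L 1 + I * L I‖ ≤ ‖L‖ + ‖L‖ := norm_add_le_of_le h1 (by simpa using hI)
  rw [antilinPart, norm_div, Complex.norm_ofNat]
  linarith

/-- The squared distance of a real-linear map `w ↦ p w + q w̄` from the homothety `σ`, measured on
the coefficients `(p, q)`. -/
noncomputable def homothetyDistSq (σ : ℝ) (L : ℂ →L[ℝ] ℂ) : ℝ :=
  ‖linPart L - σ‖ ^ 2 + ‖antilinPart L‖ ^ 2

variable {σ : ℝ}

theorem homothetyDistSq_nonneg (σ : ℝ) (L : ℂ →L[ℝ] ℂ) : 0 ≤ homothetyDistSq σ L := by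
  unfold homothetyDistSq
  positivity

theorem eq_smul_one_of_homothetyDistSq_eq_zero {L : ℂ →L[ℝ] ℂ} (h : homothetyDistSq σ L = 0) :
    L = σ • 1 := by
  obtain ⟨hlin, hanti⟩ := (add_eq_zero_iff_of_nonneg (sq_nonneg _) (sq_nonneg _)).1 h
  rw [sq_eq_zero_iff, norm_eq_zero] at hlin hanti
  rw [← realLin_linPart_antilinPart L, sub_eq_zero.1 hlin, hanti]
  ext w
  simp

theorem homothetyDistSq_le (σ : ℝ) (L : ℂ →L[ℝ] ℂ) :
    homothetyDistSq σ L ≤ 2 * ‖L - σ • 1‖ ^ 2 := by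
  have hlin : linPart L - σ = linPart (L - σ • 1) := by
    simp only [linPart, _root_.sub_apply, _root_.smul_apply, one_apply_eq_self, real_smul]
    linear_combination (-σ / 2 : ℂ) * I_sq
  have hanti : antilinPart L = antilinPart (L - σ • 1) := by
    simp only [antilinPart, _root_.sub_apply, _root_.smul_apply, one_apply_eq_self, real_smul]
    linear_combination (σ / 2 : ℂ) * I_sq
  rw [homothetyDistSq, hlin, hanti, two_mul]
  gcongr
  · exact norm_linPart_le _
  · exact norm_antilinPart_le _

variable {H : ℝ → ℂ →L[ℝ] ℂ} {H' : ℂ →L[ℝ] ℂ} {p q : ℂ} {t : ℝ}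

theorem hasDerivAt_linPart (hH : HasDerivAt H H' t) :
    HasDerivAt (fun t => linPart (H t)) (linPart H') t := by
  have hv (v : ℂ) : HasDerivAt (fun t => H t v) (H' v) t := by
    simpa using hH.clm_apply (hasDerivAt_const t v)
  exact ((hv 1).sub ((hv I).const_mul I)).div_const 2

theorem hasDerivAt_antilinPart (hH : HasDerivAt H H' t) :
    HasDerivAt (fun t => antilinPart (H t)) (antilinPart H') t := by
  have hv (v : ℂ) : HasDerivAt (fun t => H t v) (H' v) t := by
    simpa using hH.clm_apply (hasDerivAt_const t v)
  exact ((hv 1).add ((hv I).const_mul I)).div_const 2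

theorem commutator_realLin (p q : ℂ) (L : ℂ →L[ℝ] ℂ) :
    realLin p q * L - L * realLin p q =
      realLin (q * conj (antilinPart L) - antilinPart L * conj q)
        ((p - conj p) * antilinPart L + q * (conj (linPart L) - linPart L)) := by
  conv_lhs => rw [← realLin_linPart_antilinPart L, realLin_mul, realLin_mul, realLin_sub]
  congr 1 <;> ring

theorem hasDerivAt_homothetyDistSq
    (hH : HasDerivAt H (realLin p q * H t - H t * realLin p q) t) :
    HasDerivAt (fun t => homothetyDistSq σ (H t))
      (8 * (linPart (H t)).im * (q * conj (antilinPart (H t))).im) t := by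
  rw [commutator_realLin] at hH
  have hlin := (hasDerivAt_linPart hH).sub_const (σ : ℂ)
  have hanti := hasDerivAt_antilinPart hH
  rw [linPart_realLin] at hlin
  rw [antilinPart_realLin] at hanti
  refine (hlin.norm_sq.add hanti.norm_sq).congr_deriv ?_
  simp only [Complex.inner, map_sub, conj_ofReal, mul_re, sub_re, conj_re, conj_im, mul_neg,
    sub_neg_eq_add, ofReal_re, sub_im, mul_im, ofReal_im, sub_zero, add_re, sub_self, zero_mul,
    zero_sub, mul_zero, add_im, zero_add, add_zero]
  ring

theorem deriv_homothetyDistSq_le (σ : ℝ) (q : ℂ) (L : ℂ →L[ℝ] ℂ) :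
    8 * (linPart L).im * (q * conj (antilinPart L)).im ≤ 4 * ‖q‖ * homothetyDistSq σ L := by
  have him : |(linPart L).im| ≤ ‖linPart L - σ‖ := by
    simpa using abs_im_le_norm (linPart L - σ)
  have hprod : |(q * conj (antilinPart L)).im| ≤ ‖q‖ * ‖antilinPart L‖ := by
    simpa using abs_im_le_norm (q * conj (antilinPart L))
  calc 8 * (linPart L).im * (q * conj (antilinPart L)).im
      ≤ 8 * (|(linPart L).im| * |(q * conj (antilinPart L)).im|) := by
        rw [mul_assoc, ← abs_mul]
        gcongr
        exact le_abs_self _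
    _ ≤ 8 * (‖linPart L - σ‖ * (‖q‖ * ‖antilinPart L‖)) := by gcongr
    _ = 4 * ‖q‖ * (2 * ‖linPart L - σ‖ * ‖antilinPart L‖) := by ring
    _ ≤ 4 * ‖q‖ * homothetyDistSq σ L := by
        gcongr
        exact two_mul_le_add_sq _ _

end CommutatorEquation

section RealFunctions

variable {f f' g g' : ℝ → ℝ} {T : ℝ}

theorem eq_zero_of_deriv_le_mul_of_frequently_le (hf : ∀ t ≤ T, HasDerivAt f (f' t) t)
    (hg : ∀ t ≤ T, HasDerivAt g (g' t) t) (hle : ∀ t ≤ T, f' t ≤ g' t * f t)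
    (hf₀ : ∀ t ≤ T, 0 ≤ f t) (hg₀ : ∀ t ≤ T, 0 ≤ g t)
    (hsmall : ∀ ε > 0, ∃ᶠ t in atBot, f t ≤ ε) : f T = 0 := by
  have hderiv : ∀ t ≤ T, HasDerivAt (fun t => f t * Real.exp (-g t))
      ((f' t - g' t * f t) * Real.exp (-g t)) t := fun t ht =>
    ((hf t ht).mul (hg t ht).neg.exp).congr_deriv (by simp only [Pi.neg_apply]; ring)
  have hmem : ∀ t ∈ interior (Iic T), t ≤ T := fun t ht => mem_Iic.1 (interior_subset ht)
  have hanti : AntitoneOn (fun t => f t * Real.exp (-g t)) (Iic T) := by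
    refine antitoneOn_of_hasDerivWithinAt_nonpos (convex_Iic T)
      (fun t ht => (hderiv t ht).continuousAt.continuousWithinAt)
      (fun t ht => (hderiv t (hmem t ht)).hasDerivWithinAt) fun t ht => ?_
    exact mul_nonpos_of_nonpos_of_nonneg (sub_nonpos.2 (hle t (hmem t ht)))
      (Real.exp_nonneg _)
  have hzero : f T * Real.exp (-g T) ≤ 0 := by
    refine le_of_forall_pos_le_add fun ε hε => ?_
    obtain ⟨t, htε, htT⟩ := ((hsmall ε hε).and_eventually (eventually_le_atBot T)).exists
    calc f T * Real.exp (-g T) ≤ f t * Real.exp (-g t) := hanti htT self_mem_Iic htT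
      _ ≤ f t * 1 := by
          gcongr
          · exact hf₀ t htT
          · exact Real.exp_le_one_iff.2 (neg_nonpos.2 (hg₀ t htT))
      _ ≤ 0 + ε := by simpa using htε
  exact le_antisymm (nonpos_of_mul_nonpos_left hzero (Real.exp_pos _)) (hf₀ T le_rfl)

theorem frequently_abs_deriv_le {L ε : ℝ} (hg : ∀ t < T, HasDerivAt g (g' t) t)
    (hlim : Tendsto g atBot (𝓝 L)) (hε : 0 < ε) : ∃ᶠ t in atBot, |g' t| ≤ ε := by
  refine frequently_atBot.2 fun a => ?_
  have hnear := hlim.eventually (Metric.ball_mem_nhds L (half_pos hε))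
  obtain ⟨A, hA⟩ := eventually_atBot.1
    ((hnear.and (eventually_le_atBot a)).and (eventually_lt_atBot T))
  obtain ⟨t, ht, hslope⟩ := exists_hasDerivAt_eq_slope g g' (sub_one_lt A)
    (fun t ht => (hg t (hA t ht.2).2).continuousAt.continuousWithinAt)
    (fun t ht => hg t (hA t ht.2.le).2)
  refine ⟨t, (hA t ht.2.le).1.2, ?_⟩
  rw [hslope, sub_sub_cancel, div_one, ← Real.dist_eq]
  exact ((dist_triangle_right _ _ L).trans_lt
    (add_lt_add (hA A le_rfl).1.1 (hA (A - 1) (sub_one_lt A).le).1.1)).le.trans_eq (add_halves ε)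

end RealFunctions

section NearlyLinearEquation

theorem mul_gronwallBound_zero_one (K x : ℝ) :
    K * gronwallBound 0 K 1 x = Real.exp (K * x) - 1 := by
  rcases eq_or_ne K 0 with rfl | hK
  · simp
  · simp only [gronwallBound_of_K_ne_0 hK]
    field_simp
    ring

theorem norm_exp_mul_sub_le {w μ μ' ν : ℝ → ℂ} {K a b : ℝ} (hab : a ≤ b)
    (hw : ∀ s ∈ Icc a b, HasDerivAt w (μ' s * w s + ν s * conj (w s)) s)
    (hμ : ∀ s ∈ Icc a b, HasDerivAt μ (μ' s) s) (hν : ∀ s ∈ Icc a b, ‖ν s‖ ≤ K) :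
    ‖Complex.exp (μ a - μ b) * w b - w a‖ ≤ ‖w a‖ * (Real.exp (K * (b - a)) - 1) := by
  have hderiv : ∀ s ∈ Icc a b, HasDerivAt (fun s => Complex.exp (μ a - μ s) * w s - w a)
      (Complex.exp (μ a - μ s) * (ν s * conj (w s))) s := fun s hs =>
    (((((hμ s hs).const_sub (μ a)).cexp).mul (hw s hs)).sub_const (w a)).congr_deriv (by ring)
  have hbound : ∀ s ∈ Icc a b, ‖Complex.exp (μ a - μ s) * (ν s * conj (w s))‖ ≤
      K * ‖Complex.exp (μ a - μ s) * w s - w a‖ + K * ‖w a‖ := fun s hs =>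
    calc ‖Complex.exp (μ a - μ s) * (ν s * conj (w s))‖
        = ‖ν s‖ * ‖Complex.exp (μ a - μ s) * w s‖ := by
          simp only [norm_mul, norm_conj]
          ring
      _ ≤ K * (‖Complex.exp (μ a - μ s) * w s - w a‖ + ‖w a‖) :=
          mul_le_mul (hν s hs) (norm_le_norm_sub_add _ _) (norm_nonneg _)
            ((norm_nonneg _).trans (hν s hs))
      _ = K * ‖Complex.exp (μ a - μ s) * w s - w a‖ + K * ‖w a‖ := mul_add _ _ _
  refine (norm_le_mul_gronwallBound_of_eq_zero hab hderiv (by simp) hbound).trans_eq ?_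
  rw [← mul_gronwallBound_zero_one]
  ring

end NearlyLinearEquation

section Flux

variable {F : ℂ → ℝ} {t b : ℝ}

theorem hasDerivAt_integral_horizontal (hb : 0 ≤ b)
    (hF : ∀ᶠ t' : ℝ in 𝓝 t, ∀ s ∈ Icc 0 b, ContDiffAt ℝ 1 F (t' + s * I)) :
    HasDerivAt (fun t : ℝ => ∫ s in 0..b, F (t + s * I))
      (∫ s in 0..b, fderiv ℝ F (t + s * I) 1) t := by
  have hline (t' : ℝ) : Continuous fun s : ℝ => (t' : ℂ) + s * I := by fun_prop
  have hint : ∀ᶠ t' : ℝ in 𝓝 t,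
      IntervalIntegrable (fun s : ℝ => F (t' + s * I)) MeasureTheory.volume 0 b := by
    filter_upwards [hF] with t' ht'
    refine ContinuousOn.intervalIntegrable_of_Icc hb fun s hs => ?_
    exact ((ht' s hs).continuousAt.comp_of_eq (hline t').continuousAt rfl).continuousWithinAt
  have hint' (r : ℝ) : IntervalIntegrable (fun s : ℝ => r • fderiv ℝ F (t + s * I) 1)
      MeasureTheory.volume 0 b := by
    refine ContinuousOn.intervalIntegrable_of_Icc hb fun s hs => ?_
    exact ((((hF.self_of_nhds s hs).continuousAt_fderiv (by simp)).comp_of_eq (hline t).continuousAt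
      rfl).clm_apply continuousAt_const).continuousWithinAt.const_smul r
  rw [hasDerivAt_iff_isLittleO, Asymptotics.isLittleO_iff]
  intro ε hε
  filter_upwards [hint, eventually_forall_norm_horizontal_sub_le hF.self_of_nhds
    (show 0 < ε / (b + 1) by positivity)] with t' ht' hle
  rw [← intervalIntegral.integral_smul, ← intervalIntegral.integral_sub ht' hint.self_of_nhds,
    ← intervalIntegral.integral_sub (ht'.sub hint.self_of_nhds) (hint' _)]
  calc ‖∫ s in 0..b, (F (t' + s * I) - F (t + s * I) - (t' - t) • fderiv ℝ F (t + s * I) 1)‖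
      ≤ ε / (b + 1) * |t' - t| * |b - 0| :=
        intervalIntegral.norm_integral_le_of_norm_le_const fun s hs =>
          hle s (Ioc_subset_Icc_self (uIoc_of_le hb ▸ hs))
    _ = ε * ‖t' - t‖ * (b / (b + 1)) := by
        rw [sub_zero, abs_of_nonneg hb, Real.norm_eq_abs]
        ring
    _ ≤ ε * ‖t' - t‖ :=
        mul_le_of_le_one_right (by positivity) ((div_le_one (by positivity)).2 (by linarith))

theorem tendsto_integral_horizontal {c : ℝ} (hb : 0 ≤ b)
    (hF : ∀ᶠ t : ℝ in atBot, ∀ s ∈ Icc 0 b, ContinuousAt F (t + s * I))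
    (hlim : Tendsto F (comap re atBot) (𝓝 c)) :
    Tendsto (fun t : ℝ => ∫ s in 0..b, F (t + s * I)) atBot (𝓝 (b * c)) := by
  refine Metric.tendsto_nhds.2 fun ε hε => ?_
  have hnear := eventually_comap.1 (hlim.eventually (Metric.ball_mem_nhds c
    (show 0 < ε / (b + 1) by positivity)))
  filter_upwards [hF, hnear] with t ht hnear
  have hint : IntervalIntegrable (fun s : ℝ => F (t + s * I)) MeasureTheory.volume 0 b :=
    ContinuousOn.intervalIntegrable_of_Icc hb fun s hs =>
      ((ht s hs).comp_of_eq (f := fun s : ℝ => (t : ℂ) + s * I)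
        (by fun_prop) rfl).continuousWithinAt
  have hconst : b * c = ∫ _ in 0..b, c := by simp
  rw [dist_eq_norm, hconst, ← intervalIntegral.integral_sub hint intervalIntegrable_const]
  calc ‖∫ s in 0..b, (F (t + s * I) - c)‖
      ≤ ε / (b + 1) * |b - 0| := intervalIntegral.norm_integral_le_of_norm_le_const fun s _ =>
        (hnear _ (by simp)).le
    _ = ε * (b / (b + 1)) := by
        rw [sub_zero, abs_of_nonneg hb]
        ring
    _ < ε := mul_lt_of_lt_one_right hε ((div_lt_one (by positivity)).2 (by linarith))

end Flux

section SpecialPair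

/-- A special Kähler structure with metric `e^{-U}|dζ|²` on `Ω` in a coordinate `ζ` in which the
closed form `dh - a dθ` is `2 Re (k dζ)`; it is encoded by `U` and `κ = e^U k`. -/
structure IsSpecialPair (U : ℂ → ℝ) (κ : ℂ → ℂ) (Ω : Set ℂ) : Prop where
  contDiffAt_potential : ∀ ζ ∈ Ω, ContDiffAt ℝ 2 U ζ
  contDiffAt_form : ∀ ζ ∈ Ω, ContDiffAt ℝ 1 κ ζ
  dzbar_dz : ∀ ζ ∈ Ω, dzbar (dz U) ζ = ‖κ ζ‖ ^ 2
  dzbar_form : ∀ ζ ∈ Ω, dzbar κ ζ = κ ζ * conj (dz U ζ)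

/-- The coefficient `T` of the flat connection of a special pair: parallel sections satisfy
`∂φ/∂t = T φ` in the coordinate `ζ = t + i s`. -/
noncomputable def horizontalCoeff (U : ℂ → ℝ) (κ : ℂ → ℂ) (ζ : ℂ) : ℂ →L[ℝ] ℂ :=
  realLin (dz U ζ) (-conj (κ ζ))

/-- The coefficient `S` of the flat connection of a special pair: parallel sections satisfy
`∂φ/∂s = S φ` in the coordinate `ζ = t + i s`. -/
noncomputable def verticalCoeff (U : ℂ → ℝ) (κ : ℂ → ℂ) (ζ : ℂ) : ℂ →L[ℝ] ℂ :=
  realLin (I * dz U ζ) (I * conj (κ ζ))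

variable {U : ℂ → ℝ} {κ : ℂ → ℂ} {Ω : Set ℂ} {ζ : ℂ}

theorem contDiffAt_conj (hκ : ContDiffAt ℝ 1 κ ζ) : ContDiffAt ℝ 1 (fun ζ => conj (κ ζ)) ζ :=
  conjCLE.contDiff.contDiffAt.comp ζ hκ

theorem fderiv_conj_apply (hκ : DifferentiableAt ℝ κ ζ) (v : ℂ) :
    fderiv ℝ (fun ζ => conj (κ ζ)) ζ v = conj (fderiv ℝ κ ζ v) := by
  have hconj : HasFDerivAt (fun ζ => conj (κ ζ)) _ ζ := conjCLE.hasFDerivAt.comp ζ hκ.hasFDerivAt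
  rw [hconj.fderiv]
  rfl

theorem IsSpecialPair.contDiffAt_horizontalCoeff (h : IsSpecialPair U κ Ω) (hζ : ζ ∈ Ω) :
    ContDiffAt ℝ 1 (horizontalCoeff U κ) ζ :=
  contDiffAt_realLin (contDiffAt_dz (h.contDiffAt_potential ζ hζ))
    (contDiffAt_conj (h.contDiffAt_form ζ hζ)).neg

theorem IsSpecialPair.contDiffAt_verticalCoeff (h : IsSpecialPair U κ Ω) (hζ : ζ ∈ Ω) :
    ContDiffAt ℝ 1 (verticalCoeff U κ) ζ :=
  contDiffAt_realLin (contDiffAt_const.mul (contDiffAt_dz (h.contDiffAt_potential ζ hζ)))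
    (contDiffAt_const.mul (contDiffAt_conj (h.contDiffAt_form ζ hζ)))

theorem IsSpecialPair.flat (h : IsSpecialPair U κ Ω) (hζ : ζ ∈ Ω) :
    fderiv ℝ (verticalCoeff U κ) ζ 1 + verticalCoeff U κ ζ * horizontalCoeff U κ ζ =
      fderiv ℝ (horizontalCoeff U κ) ζ I + horizontalCoeff U κ ζ * verticalCoeff U κ ζ := by
  have hlam := (contDiffAt_dz (h.contDiffAt_potential ζ hζ)).differentiableAt one_ne_zero
  have hκ := (h.contDiffAt_form ζ hζ).differentiableAt one_ne_zero
  have hκ' := (contDiffAt_conj (h.contDiffAt_form ζ hζ)).differentiableAt one_ne_zero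
  have hlin : fderiv ℝ (dz U) ζ 1 + I * fderiv ℝ (dz U) ζ I = 2 * (κ ζ * conj (κ ζ)) := by
    have hdzbar := h.dzbar_dz ζ hζ
    rw [dzbar, antilinPart, ← mul_conj'] at hdzbar
    linear_combination 2 * hdzbar
  have hanti : conj (fderiv ℝ κ ζ 1) - I * conj (fderiv ℝ κ ζ I) =
      2 * (conj (κ ζ) * dz U ζ) := by
    have hdzbar := congrArg conj (h.dzbar_form ζ hζ)
    simp only [dzbar, antilinPart, map_div₀, map_add, map_mul, conj_I, conj_conj,
      map_ofNat] at hdzbar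
    linear_combination 2 * hdzbar
  unfold verticalCoeff horizontalCoeff
  rw [fderiv_realLin (hlam.const_mul I) (hκ'.const_mul I), fderiv_realLin hlam hκ'.fun_neg,
    realLin_mul, realLin_mul]
  ext w
  rw [fderiv_const_mul hlam, fderiv_const_mul hκ', fderiv_fun_neg]
  simp only [_root_.add_apply, _root_.smul_apply, _root_.neg_apply, realLin_apply, smul_eq_mul,
    fderiv_conj_apply hκ, map_mul, map_neg, conj_I, conj_conj]
  linear_combination I * w * hlin + I * conj w * hanti - w * fderiv ℝ (dz U) ζ I * I_sq
    + conj w * conj (fderiv ℝ κ ζ I) * I_sq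

end SpecialPair

section ConicalPair

/-- The open left half-plane, covering the punctured unit disc through `exp`. -/
def leftHalfPlane : Set ℂ := {ζ | ζ.re < 0}

/-- A special pair on the left half-plane which descends to the punctured disc, where it has a
conical singularity of order `β` at the origin and `κ = O(|z|)`. -/
structure IsConicalPair (U : ℂ → ℝ) (κ : ℂ → ℂ) (β : ℤ) : Prop
    extends IsSpecialPair U κ leftHalfPlane where
  periodic_potential : Function.Periodic U (2 * π * I)
  periodic_form : Function.Periodic κ (2 * π * I)
  tendsto_potential : ∃ c, Tendsto (fun ζ => U ζ + β * ζ.re) (comap re atBot) (𝓝 c)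
  norm_form_le : ∀ T < 0, ∃ C, ∀ ζ : ℂ, ζ.re ≤ T → ‖κ ζ‖ ≤ C * Real.exp ζ.re

/-- The flux of `∂U/∂t` through the vertical segment `t + i [0, 2π]`. -/
noncomputable def flux (U : ℂ → ℝ) (t : ℝ) : ℝ :=
  ∫ s in 0..2 * π, fderiv ℝ U (t + s * I) 1

variable {U : ℂ → ℝ} {κ : ℂ → ℂ} {β : ℤ} {t T : ℝ} {φ : ℝ → ℝ → ℂ →L[ℝ] ℂ}

theorem periodic_dz {p : ℂ} (hU : Function.Periodic U p) : Function.Periodic (dz U) p := fun z => by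
  have hshift (w : ℂ) : U (z + p + w) = U (z + w) := by rw [add_right_comm, hU]
  simp only [dz, pdx, pdy, hshift]

theorem add_mul_I_mem_leftHalfPlane (ht : t < 0) (s : ℝ) : (t : ℂ) + s * I ∈ leftHalfPlane := by
  simpa [leftHalfPlane] using ht

theorem IsConicalPair.contDiffAt_line (h : IsConicalPair U κ β) (ht : t < 0) (s : ℝ) :
    ContDiffAt ℝ 2 U (t + s * I) :=
  h.contDiffAt_potential _ (add_mul_I_mem_leftHalfPlane ht s)

theorem IsConicalPair.continuous_fderiv_line (h : IsConicalPair U κ β) (ht : t < 0) :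
    Continuous fun s : ℝ => fderiv ℝ U (t + s * I) 1 :=
  continuous_iff_continuousAt.2 fun s =>
    (((h.contDiffAt_line ht s).continuousAt_fderiv two_ne_zero).comp_of_eq
      (f := fun s : ℝ => (t : ℂ) + s * I) (by fun_prop) rfl).clm_apply continuousAt_const

theorem IsConicalPair.frequently_abs_flux_le (h : IsConicalPair U κ β) {ε : ℝ} (hε : 0 < ε) :
    ∃ᶠ t in atBot, |flux U t + 2 * π * β| ≤ ε := by
  obtain ⟨c, hc⟩ := h.tendsto_potential
  set F : ℂ → ℝ := fun ζ => U ζ + β * ζ.re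
  have hF {t : ℝ} (ht : t < 0) (s : ℝ) : ContDiffAt ℝ 1 F (t + s * I) :=
    ((h.contDiffAt_line ht s).of_le (by norm_num)).add
      (contDiffAt_const.mul reCLM.contDiff.contDiffAt)
  have hfderiv {t : ℝ} (ht : t < 0) (s : ℝ) :
      fderiv ℝ F (t + s * I) 1 = fderiv ℝ U (t + s * I) 1 + β := by
    have hFderiv : HasFDerivAt F _ (t + s * I) :=
      ((h.contDiffAt_line ht s).differentiableAt two_ne_zero).hasFDerivAt.add
        (reCLM.hasFDerivAt.const_mul (β : ℝ))
    simp [hFderiv.fderiv]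
  have hflux : ∀ t < 0, HasDerivAt (fun t : ℝ => ∫ s in 0..2 * π, F (t + s * I))
      (flux U t + 2 * π * β) t := fun t ht => by
    refine (hasDerivAt_integral_horizontal two_pi_pos.le ?_).congr_deriv ?_
    · filter_upwards [eventually_lt_nhds ht] with t' ht' s _ using hF ht' s
    · simp only [hfderiv ht]
      rw [intervalIntegral.integral_add _ intervalIntegrable_const, flux]
      · simp
      · exact (h.continuous_fderiv_line ht).intervalIntegrable _ _
  refine frequently_abs_deriv_le hflux (tendsto_integral_horizontal two_pi_pos.le ?_ hc) hε
  filter_upwards [eventually_lt_atBot 0] with t ht s _ using (hF ht s).continuousAt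

theorem norm_exp_I_mul_half_sub_le (L : ℝ) (β : ℤ) :
    ‖Complex.exp (I * L / 2) - (-1) ^ β‖ ≤ |L + 2 * π * β| / 2 := by
  have hsign : Complex.exp (-(β * (π * I))) = (-1) ^ β := by
    rw [Complex.exp_neg, Complex.exp_int_mul, exp_pi_mul_I, ← _root_.inv_zpow, inv_neg_one]
  have hfactor : Complex.exp (I * L / 2) =
      Complex.exp (I * ((L + 2 * π * β) / 2 : ℝ)) * (-1) ^ β := by
    rw [← hsign, ← Complex.exp_add]
    congr 1
    push_cast
    ring
  rw [hfactor, ← sub_one_mul, norm_mul, norm_zpow, norm_neg, norm_one, _root_.one_zpow, mul_one]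
  simpa [abs_div] using Real.norm_exp_I_mul_ofReal_sub_one_le (x := (L + 2 * π * β) / 2)

/- Up to the small antilinear term, `∂φ/∂s = I ∂U/∂ζ φ` is solved by `exp μ`, and `U` is periodic,
so only the flux survives in `μ` after one turn. -/
theorem IsConicalPair.norm_exp_flux_mul_sub_le (h : IsConicalPair U κ β) (ht : t < 0) {K : ℝ}
    (hK : ∀ s ∈ Icc 0 (2 * π), ‖κ (t + s * I)‖ ≤ K) {ψ : ℝ → ℂ →L[ℝ] ℂ}
    (hψ : IsFundamentalSolution (fun s => verticalCoeff U κ (t + s * I)) ψ) (v : ℂ) :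
    ‖Complex.exp (-(I * flux U t / 2)) * ψ (2 * π) v - v‖ ≤
      ‖v‖ * (Real.exp (K * (2 * π)) - 1) := by
  set μ : ℝ → ℂ := fun s =>
    (U (t + s * I) + I * ((∫ σ in 0..s, fderiv ℝ U (t + σ * I) 1 : ℝ) : ℂ)) / 2
  have hUd (s : ℝ) : DifferentiableAt ℝ U (t + s * I) :=
    (h.contDiffAt_line ht s).differentiableAt two_ne_zero
  have hμ (s : ℝ) : HasDerivAt μ (I * dz U (t + s * I)) s := by
    have hint := ((h.continuous_fderiv_line ht).integral_hasStrictDerivAt 0 s).hasDerivAt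
    refine (((hasDerivAt_vertical (hUd s)).ofReal_comp.add
      (hint.ofReal_comp.const_mul I)).div_const 2).congr_deriv ?_
    rw [dz_eq_fderiv (hUd s)]
    linear_combination (fderiv ℝ U (t + s * I) I : ℂ) / 2 * I_sq
  have hμ₀ : μ 0 - μ (2 * π) = -(I * flux U t / 2) := by
    have hU : U (t + (2 * π : ℝ) * I) = U t := by simpa using h.periodic_potential t
    simp only [μ, hU, flux]
    simp only [ofReal_zero, zero_mul, add_zero, intervalIntegral.integral_same, mul_zero]
    ring
  have hν : ∀ s ∈ Icc 0 (2 * π), ‖I * conj (κ (t + s * I))‖ ≤ K := by simpa using hK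
  have hw (s : ℝ) : HasDerivAt (fun s => ψ s v) (I * dz U (t + s * I) * ψ s v +
      I * conj (κ (t + s * I)) * conj (ψ s v)) s := by
    simpa [verticalCoeff] using hψ.hasDerivAt_apply v s
  have hest := norm_exp_mul_sub_le two_pi_pos.le (fun s _ => hw s) (fun s _ => hμ s) hν
  simpa [hμ₀, hψ.map_zero] using hest

theorem IsConicalPair.norm_sub_exp_flux_mul_le (h : IsConicalPair U κ β) (ht : t < 0) {K : ℝ}
    (hK : ∀ s ∈ Icc 0 (2 * π), ‖κ (t + s * I)‖ ≤ K) {ψ : ℝ → ℂ →L[ℝ] ℂ}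
    (hψ : IsFundamentalSolution (fun s => verticalCoeff U κ (t + s * I)) ψ) (v : ℂ) :
    ‖ψ (2 * π) v - Complex.exp (I * flux U t / 2) * v‖ ≤
      ‖v‖ * (Real.exp (K * (2 * π)) - 1) := by
  have hexp : Complex.exp (I * flux U t / 2) * Complex.exp (-(I * flux U t / 2)) = 1 := by
    rw [← Complex.exp_add, add_neg_cancel, Complex.exp_zero]
  have hnorm : ‖Complex.exp (I * flux U t / 2)‖ = 1 := by simp [Complex.norm_exp]
  calc ‖ψ (2 * π) v - Complex.exp (I * flux U t / 2) * v‖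
      = ‖Complex.exp (I * flux U t / 2) *
          (Complex.exp (-(I * flux U t / 2)) * ψ (2 * π) v - v)‖ := by
        rw [mul_sub, ← mul_assoc, hexp, one_mul]
    _ ≤ ‖v‖ * (Real.exp (K * (2 * π)) - 1) := by
        rw [norm_mul, hnorm, one_mul]
        exact h.norm_exp_flux_mul_sub_le ht hK hψ v

theorem IsConicalPair.frequently_norm_monodromy_sub_le (h : IsConicalPair U κ β)
    (hφ : ∀ t : ℝ, t < 0 → IsFundamentalSolution (fun s => verticalCoeff U κ (t + s * I)) (φ t))
    {ε : ℝ} (hε : 0 < ε) :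
    ∃ᶠ t in atBot, ‖φ t (2 * π) - ((-1 : ℝ) ^ β) • 1‖ ≤ ε := by
  obtain ⟨C, hC⟩ := h.norm_form_le (-1) (by norm_num)
  have hsmall : ∀ᶠ t in atBot, Real.exp (C * Real.exp t * (2 * π)) - 1 ≤ ε / 2 := by
    have hlim : Tendsto (fun t => Real.exp (C * Real.exp t * (2 * π)) - 1) atBot (𝓝 0) := by
      have hlin := (Real.tendsto_exp_atBot.const_mul C).mul_const (2 * π)
      simpa using ((Real.continuous_exp.tendsto _).comp hlin).sub_const 1
    exact hlim.eventually_le_const (half_pos hε)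
  refine ((h.frequently_abs_flux_le hε).and_eventually
    (hsmall.and (eventually_le_atBot (-1)))).mono ?_
  rintro t ⟨hflux, hexp, ht⟩
  have ht' : t < 0 := by linarith
  have hK : ∀ s ∈ Icc 0 (2 * π), ‖κ (t + s * I)‖ ≤ C * Real.exp t := fun s _ => by
    simpa using hC (t + s * I) (by simpa using ht)
  refine ContinuousLinearMap.opNorm_le_bound _ hε.le fun v => ?_
  have hrot : ‖φ t (2 * π) v - Complex.exp (I * flux U t / 2) * v‖ ≤ ‖v‖ * (ε / 2) :=
    (h.norm_sub_exp_flux_mul_le ht' hK (hφ t ht') v).trans (by gcongr)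
  have hsign : ‖(Complex.exp (I * flux U t / 2) - (-1) ^ β) * v‖ ≤ ε / 2 * ‖v‖ := by
    rw [norm_mul]
    gcongr
    exact (norm_exp_I_mul_half_sub_le _ _).trans (by gcongr)
  calc ‖(φ t (2 * π) - ((-1 : ℝ) ^ β) • 1) v‖
      = ‖(φ t (2 * π) v - Complex.exp (I * flux U t / 2) * v) +
          (Complex.exp (I * flux U t / 2) - (-1) ^ β) * v‖ := by
        simp [sub_mul]
    _ ≤ ‖v‖ * (ε / 2) + ε / 2 * ‖v‖ := norm_add_le_of_le hrot hsign
    _ = ε * ‖v‖ := by ring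

theorem IsConicalPair.hasDerivAt_monodromy (h : IsConicalPair U κ β)
    (hφ : ∀ t : ℝ, t < 0 → IsFundamentalSolution (fun s => verticalCoeff U κ (t + s * I)) (φ t))
    (ht : t < 0) :
    HasDerivAt (fun t => φ t (2 * π)) (horizontalCoeff U κ t * φ t (2 * π) -
      φ t (2 * π) * horizontalCoeff U κ t) t := by
  have hperiod : horizontalCoeff U κ (t + (2 * π : ℝ) * I) = horizontalCoeff U κ t := by
    have hdz := periodic_dz h.periodic_potential t
    have hκ := h.periodic_form t
    push_cast
    rw [horizontalCoeff, hdz, hκ, horizontalCoeff]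
  have hmem (s : ℝ) := add_mul_I_mem_leftHalfPlane ht s
  rw [← hperiod]
  nth_rw 2 [hperiod]
  exact hasDerivAt_holonomy two_pi_pos.le (fun s _ => h.contDiffAt_verticalCoeff (hmem s))
    (fun s _ => (h.contDiffAt_horizontalCoeff (hmem s)).differentiableAt one_ne_zero)
    (fun s _ => h.flat (hmem s)) ((eventually_lt_nhds ht).mono hφ)

theorem IsConicalPair.monodromy_eq (h : IsConicalPair U κ β)
    (hφ : ∀ t : ℝ, t < 0 → IsFundamentalSolution (fun s => verticalCoeff U κ (t + s * I)) (φ t))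
    (hT : T < 0) : φ T (2 * π) = ((-1 : ℝ) ^ β) • 1 := by
  obtain ⟨C, hC⟩ := h.norm_form_le T hT
  have hκ (t : ℝ) (ht : t ≤ T) : ‖-conj (κ t)‖ ≤ C * Real.exp t := by
    simpa using hC t ht
  have hsmall : ∀ ε > 0, ∃ᶠ t in atBot, homothetyDistSq ((-1) ^ β) (φ t (2 * π)) ≤ ε := by
    refine fun ε hε => (h.frequently_norm_monodromy_sub_le hφ
      (show 0 < √(ε / 2) by positivity)).mono fun t ht => (homothetyDistSq_le _ _).trans ?_
    calc 2 * ‖φ t (2 * π) - ((-1 : ℝ) ^ β) • 1‖ ^ 2 ≤ 2 * √(ε / 2) ^ 2 := by gcongr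
      _ = ε := by rw [Real.sq_sqrt (by positivity), mul_div_cancel₀ _ two_ne_zero]
  have hle : ∀ t ≤ T, 8 * (linPart (φ t (2 * π))).im *
      (-conj (κ t) * conj (antilinPart (φ t (2 * π)))).im ≤
        4 * (C * Real.exp t) * homothetyDistSq ((-1) ^ β) (φ t (2 * π)) := fun t ht =>
    (deriv_homothetyDistSq_le _ _ _).trans (by
      gcongr
      · exact homothetyDistSq_nonneg _ _
      · exact hκ t ht)
  have hzero : homothetyDistSq ((-1) ^ β) (φ T (2 * π)) = 0 :=
    eq_zero_of_deriv_le_mul_of_frequently_le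
      (f := fun t => homothetyDistSq ((-1) ^ β) (φ t (2 * π)))
      (fun t ht => hasDerivAt_homothetyDistSq (h.hasDerivAt_monodromy hφ (ht.trans_lt hT)))
      (fun t _ => ((Real.hasDerivAt_exp t).const_mul C).const_mul 4) hle
      (fun _ _ => homothetyDistSq_nonneg _ _)
      (fun t ht => mul_nonneg zero_le_four ((norm_nonneg _).trans (hκ t ht))) hsmall
  exact eq_smul_one_of_homothetyDistSq_eq_zero hzero

end ConicalPair

section MatrixBridge

/-- The identification of real `2 × 2` matrices with real-linear maps of `ℂ` in the basis `1, I`. -/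
noncomputable def matrixEquivRealLinear : Matrix (Fin 2) (Fin 2) ℝ ≃ₐ[ℝ] (ℂ →L[ℝ] ℂ) :=
  (Matrix.toLinAlgEquiv Complex.basisOneI).trans (Module.End.toContinuousLinearMap ℂ)

theorem matrixEquivRealLinear_apply (M : Matrix (Fin 2) (Fin 2) ℝ) (w : ℂ) :
    matrixEquivRealLinear M w =
      (M 0 0 * w.re + M 0 1 * w.im) + (M 1 0 * w.re + M 1 1 * w.im) * I := by
  have h : matrixEquivRealLinear M w = Matrix.toLinAlgEquiv Complex.basisOneI M w := rfl
  simp [h, Matrix.toLinAlgEquiv_apply, Matrix.mulVec, dotProduct]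

theorem hasDerivAt_linearMap_matrix {m n E : Type*} [Finite m] [Finite n]
    [NormedAddCommGroup E] [NormedSpace ℝ E] (L : Matrix m n ℝ →ₗ[ℝ] E)
    {Φ : ℝ → Matrix m n ℝ} {Φ' : Matrix m n ℝ} {s : ℝ}
    (hΦ : ∀ i j, HasDerivAt (fun s => Φ s i j) (Φ' i j) s) :
    HasDerivAt (fun s => L (Φ s)) (L Φ') s := by
  classical
  cases nonempty_fintype m
  cases nonempty_fintype n
  have hL (A : Matrix m n ℝ) : L A = ∑ i, ∑ j, A i j • L (Matrix.single i j 1) := by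
    conv_lhs => rw [Matrix.matrix_eq_sum_single A]
    simp only [map_sum, ← map_smul, Matrix.smul_single, smul_eq_mul, mul_one]
  have hsum := HasDerivAt.fun_sum (u := Finset.univ) fun i _ =>
    HasDerivAt.fun_sum (u := Finset.univ) fun j _ => (hΦ i j).smul_const (L (Matrix.single i j 1))
  simpa only [← hL] using hsum

end MatrixBridge

section Pullback

variable {f H U : ℂ → ℝ} {φ : ℂ → ℂ} {z : ℂ} {Ω : Set ℂ}

theorem dz_mul_self (f : ℂ → ℝ) (hz : z ≠ 0) : dz f z * z = (‖z‖ * pdr f z - pdθ f z * I) / 2 := by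
  have hz' : ‖z‖ ≠ 0 := norm_ne_zero_iff.2 hz
  have hr : ‖z‖ * pdr f z = z.re * pdx f z + z.im * pdy f z := mul_div_cancel₀ _ hz'
  rw [← ofReal_mul, hr]
  apply Complex.ext
  · simp only [dz, mul_re, div_ofNat_re, sub_re, ofReal_re, I_re, mul_zero, ofReal_im, I_im,
      mul_one, sub_self, sub_zero, div_ofNat_im, sub_im, mul_im, add_zero, zero_sub, ofReal_add,
      ofReal_mul, pdθ, neg_mul, ofReal_neg, add_re, neg_re, add_im, neg_im, zero_mul, neg_zero]
    ring
  · simp only [dz, mul_im, div_ofNat_re, sub_re, ofReal_re, mul_re, I_re, mul_zero, ofReal_im, I_im,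
      mul_one, sub_self, sub_zero, div_ofNat_im, sub_im, add_zero, zero_sub, ofReal_add, ofReal_mul,
      pdθ, neg_mul, ofReal_neg, add_im, zero_mul, add_re, neg_re, neg_im, neg_zero, neg_add_rev,
      neg_neg]
    ring

theorem sq_add_sq_eq_norm_sq (h : ℂ → ℝ) (a : ℝ) (z : ℂ) :
    (pdx h z + a * z.im / ‖z‖ ^ 2) ^ 2 + (pdy h z - a * z.re / ‖z‖ ^ 2) ^ 2 =
      ‖2 * dz h z + I * a / z‖ ^ 2 := by
  rw [← normSq_eq_norm_sq, ← normSq_eq_norm_sq, normSq_apply (2 * dz h z + I * a / z)]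
  simp only [dz, add_re, mul_re, re_ofNat, div_ofNat_re, sub_re, ofReal_re, I_re, mul_zero,
    ofReal_im, I_im, mul_one, sub_self, sub_zero, im_ofNat, div_ofNat_im, sub_im, mul_im, add_zero,
    zero_sub, zero_mul, div_re, zero_div, one_mul, zero_add, add_im, div_im]
  ring

theorem lap_comp (hf : ContDiffAt ℝ 2 f (φ z)) (hφ : AnalyticAt ℂ φ z) :
    lap (f ∘ φ) z = lap f (φ z) * ‖deriv φ z‖ ^ 2 := by
  have hφℝ : ContDiffAt ℝ 2 φ z := hφ.contDiffAt.restrict_scalars ℝ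
  have hdz : dz (f ∘ φ) =ᶠ[𝓝 z] (dz f ∘ φ) * deriv φ := by
    filter_upwards [hφ.continuousAt.eventually (hf.eventually (by simp)),
      hφ.eventually_analyticAt] with w hw hφw
    exact dz_comp (hw.differentiableAt two_ne_zero) hφw.differentiableAt.hasDerivAt
  have hdzf := (contDiffAt_dz hf).differentiableAt one_ne_zero
  have hdzbar : dzbar (dz (f ∘ φ)) z = dzbar (dz f) (φ z) * conj (deriv φ z) * deriv φ z := by
    have hφ' := hφ.deriv.differentiableAt
    rw [dzbar, hdz.fderiv_eq, ← dzbar, dzbar_mul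
      (hdzf.comp z (hφℝ.differentiableAt two_ne_zero)) (hφ'.restrictScalars ℝ),
      dzbar_comp hdzf hφ.differentiableAt.hasDerivAt, dzbar_eq_zero hφ', mul_zero, add_zero]
  rw [← ofReal_inj, lap_eq_four_mul_dzbar_dz (hf.comp z hφℝ), hdzbar, ofReal_mul,
    lap_eq_four_mul_dzbar_dz hf, ofReal_pow, ← mul_conj']
  ring

theorem isSpecialPair_of_lap_eq (c : ℂ) (hH : ∀ ζ ∈ Ω, ContDiffAt ℝ 2 H ζ)
    (hU : ∀ ζ ∈ Ω, ContDiffAt ℝ 2 U ζ) (hharm : ∀ ζ ∈ Ω, lap H ζ = 0)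
    (hpde : ∀ ζ ∈ Ω, lap U ζ = 4 * (Real.exp (U ζ) * ‖dz H ζ + c‖) ^ 2) :
    IsSpecialPair U (fun ζ => Real.exp (U ζ) * (dz H ζ + c)) Ω where
  contDiffAt_potential := hU
  contDiffAt_form ζ hζ :=
    (ofRealCLM.contDiff.contDiffAt.comp ζ ((hU ζ hζ).of_le (by norm_num)).exp).mul
      ((contDiffAt_dz (hH ζ hζ)).add contDiffAt_const)
  dzbar_dz ζ hζ := by
    have hlap := lap_eq_four_mul_dzbar_dz (hU ζ hζ)
    rw [hpde ζ hζ] at hlap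
    push_cast at hlap
    rw [norm_mul, norm_real, Real.norm_of_nonneg (Real.exp_nonneg _)]
    push_cast
    linear_combination -hlap / 4
  dzbar_form ζ hζ := by
    have hexp : DifferentiableAt ℝ (fun ζ => (Real.exp (U ζ) : ℂ)) ζ :=
      ofRealCLM.differentiableAt.comp ζ ((hU ζ hζ).differentiableAt two_ne_zero).exp
    have hdz := (contDiffAt_dz (hH ζ hζ)).differentiableAt one_ne_zero
    have hholo : dzbar (fun ζ => dz H ζ + c) ζ = 0 := by
      have hlap := lap_eq_four_mul_dzbar_dz (hH ζ hζ)
      rw [dzbar, fderiv_add_const, ← dzbar]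
      rw [hharm ζ hζ, ofReal_zero] at hlap
      linear_combination -hlap / 4
    refine (dzbar_mul hexp (hdz.add_const c)).trans ?_
    rw [hholo, dzbar_exp_ofReal ((hU ζ hζ).differentiableAt two_ne_zero)]
    ring

end Pullback

section Growth

variable {a : ℝ} {β N : ℤ} {z : ℂ}

theorem exists_forall_norm_le_of_tendsto_nhdsNE {X E : Type*} [TopologicalSpace X] [T1Space X]
    [NormedAddCommGroup E] {f : X → E} {K : Set X} {x₀ : X} {y : E} (hK : IsCompact K)
    (hf : ContinuousOn f (K \ {x₀})) (hlim : Tendsto f (𝓝[≠] x₀) (𝓝 y)) :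
    ∃ B, ∀ x ∈ K, x ≠ x₀ → ‖f x‖ ≤ B := by
  classical
  have hcont : ContinuousOn (Function.update f x₀ y) K := continuousOn_update_iff.2
    ⟨hf, fun _ => hlim.mono_left (nhdsWithin_mono _ fun _ hx => hx.2)⟩
  obtain ⟨B, hB⟩ := hK.exists_bound_of_continuousOn hcont
  exact ⟨B, fun x hx hne => by simpa [hne] using hB x hx⟩

theorem exp_le_mul_norm_zpow {x B : ℝ} (hz : z ≠ 0) (hB : x + β * Real.log ‖z‖ ≤ B) :
    Real.exp x ≤ Real.exp B * ‖z‖ ^ (-β) := by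
  have hz' : 0 < ‖z‖ := norm_pos_iff.2 hz
  rw [← Real.exp_log (zpow_pos hz' _), Real.log_zpow, ← Real.exp_add]
  gcongr
  push_cast
  linarith

theorem norm_zpow_mul_norm_add_le {M : ℝ} {w : ℂ} (hz : z ≠ 0) (hz1 : ‖z‖ ≤ 1) (hw : ‖w‖ ≤ M)
    (hβN : β ≤ N) (hβa : a ≠ 0 → β ≤ -1) :
    ‖z‖ ^ (-β) * ‖z ^ N * w * z + I * a‖ ≤ (M + |a|) * ‖z‖ := by
  have hz' : 0 < ‖z‖ := norm_pos_iff.2 hz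
  have hzpow {k : ℤ} (hk : 1 ≤ k) : ‖z‖ ^ k ≤ ‖z‖ := by
    simpa using zpow_le_zpow_right_of_le_one₀ hz' hz1 hk
  have hsing : ‖z‖ ^ (-β) * ‖z ^ N * w * z‖ ≤ ‖z‖ * M := by
    calc ‖z‖ ^ (-β) * ‖z ^ N * w * z‖ = ‖z‖ ^ (-β + N + 1) * ‖w‖ := by
          rw [zpow_add_one₀ hz'.ne', zpow_add₀ hz'.ne', norm_mul, norm_mul, norm_zpow]
          ring
      _ ≤ ‖z‖ * M := mul_le_mul (hzpow (by lia)) hw (norm_nonneg _) hz'.le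
  have hconst : ‖z‖ ^ (-β) * ‖I * (a : ℂ)‖ ≤ ‖z‖ * |a| := by
    rcases eq_or_ne a 0 with rfl | ha
    · simp
    · simpa using mul_le_mul_of_nonneg_right (hzpow (k := -β) (by linarith [hβa ha])) (abs_nonneg a)
  calc ‖z‖ ^ (-β) * ‖z ^ N * w * z + I * a‖
      ≤ ‖z‖ ^ (-β) * (‖z ^ N * w * z‖ + ‖I * (a : ℂ)‖) := by
        gcongr
        exact norm_add_le _ _
    _ ≤ (M + |a|) * ‖z‖ := by linarith

end Growth

section PuncturedDisc

variable {h u : ℂ → ℝ} {G : ℂ → ℂ} {a c : ℝ} {β N : ℤ} {z ζ : ℂ}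

/-- The form `e^u ∂h` of a special Kähler structure `(h, u, a)` in the logarithmic coordinate
`ζ = log z`, in which `a φ = -a dθ` contributes the constant `i a / 2`. -/
noncomputable def logForm (h u : ℂ → ℝ) (a : ℝ) (ζ : ℂ) : ℂ :=
  Real.exp (u (Complex.exp ζ)) * (dz (h ∘ Complex.exp) ζ + I * a / 2)

theorem PDisc_eq : PDisc = {0}ᶜ ∩ Metric.ball 0 1 := by
  ext z
  simp [PDisc]

theorem isOpen_PDisc : IsOpen PDisc :=
  PDisc_eq ▸ isOpen_compl_singleton.inter Metric.isOpen_ball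

theorem nhdsWithin_PDisc_zero : 𝓝[PDisc] (0 : ℂ) = 𝓝[≠] 0 := by
  rw [PDisc_eq]
  exact nhdsWithin_inter_of_mem' (mem_nhdsWithin_of_mem_nhds (Metric.ball_mem_nhds 0 one_pos))

theorem exp_mem_PDisc (hζ : ζ ∈ leftHalfPlane) : Complex.exp ζ ∈ PDisc := by
  rw [PDisc, mem_ofPred_eq, Complex.norm_exp]
  exact ⟨Real.exp_pos _, Real.exp_lt_one_iff.2 hζ⟩

theorem dz_comp_exp {f : ℂ → ℝ} (hf : ContDiffOn ℝ 2 f PDisc) (hζ : ζ ∈ leftHalfPlane) :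
    dz (f ∘ Complex.exp) ζ = dz f (Complex.exp ζ) * Complex.exp ζ :=
  dz_comp ((hf.contDiffAt (isOpen_PDisc.mem_nhds (exp_mem_PDisc hζ))).differentiableAt two_ne_zero)
    (Complex.hasDerivAt_exp ζ)

theorem contDiffAt_comp_exp {f : ℂ → ℝ} (hf : ContDiffOn ℝ 2 f PDisc) (hζ : ζ ∈ leftHalfPlane) :
    ContDiffAt ℝ 2 (f ∘ Complex.exp) ζ :=
  (hf.contDiffAt (isOpen_PDisc.mem_nhds (exp_mem_PDisc hζ))).comp ζ
    (Complex.contDiff_exp (𝕜 := ℝ)).contDiffAt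

theorem lap_comp_exp {f : ℂ → ℝ} (hf : ContDiffOn ℝ 2 f PDisc) (hζ : ζ ∈ leftHalfPlane) :
    lap (f ∘ Complex.exp) ζ = lap f (Complex.exp ζ) * ‖Complex.exp ζ‖ ^ 2 := by
  rw [lap_comp (hf.contDiffAt (isOpen_PDisc.mem_nhds (exp_mem_PDisc hζ))) analyticAt_cexp,
    (Complex.hasDerivAt_exp ζ).deriv]

theorem isSpecialPair_logForm (hh : ContDiffOn ℝ 2 h PDisc) (hu : ContDiffOn ℝ 2 u PDisc)
    (hharm : ∀ z ∈ PDisc, lap h z = 0)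
    (hpde : ∀ z ∈ PDisc, lap u z = ((pdx h z + a * z.im / ‖z‖ ^ 2) ^ 2 +
      (pdy h z - a * z.re / ‖z‖ ^ 2) ^ 2) * Real.exp (2 * u z)) :
    IsSpecialPair (u ∘ Complex.exp) (logForm h u a) leftHalfPlane := by
  refine isSpecialPair_of_lap_eq _ (fun ζ => contDiffAt_comp_exp hh)
    (fun ζ => contDiffAt_comp_exp hu) (fun ζ hζ => ?_) fun ζ hζ => ?_
  · rw [lap_comp_exp hh hζ, hharm _ (exp_mem_PDisc hζ), zero_mul]
  · have hnorm : ‖2 * dz h (Complex.exp ζ) + I * a / Complex.exp ζ‖ * ‖Complex.exp ζ‖ =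
        2 * ‖dz h (Complex.exp ζ) * Complex.exp ζ + I * a / 2‖ := by
      rw [← norm_mul, ← Complex.norm_two, ← norm_mul]
      congr 1
      field_simp
    calc lap (u ∘ Complex.exp) ζ
        = (Real.exp (u (Complex.exp ζ)) *
            (‖2 * dz h (Complex.exp ζ) + I * a / Complex.exp ζ‖ * ‖Complex.exp ζ‖)) ^ 2 := by
          rw [lap_comp_exp hu hζ, hpde _ (exp_mem_PDisc hζ), sq_add_sq_eq_norm_sq, two_mul (u _),
            Real.exp_add]
          ring
      _ = 4 * (Real.exp ((u ∘ Complex.exp) ζ) * ‖dz (h ∘ Complex.exp) ζ + I * a / 2‖) ^ 2 := by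
          rw [hnorm, dz_comp_exp hh hζ, Function.comp_apply]
          ring

theorem matrixEquivRealLinear_neg_Mθ (a : ℝ) (hh : ContDiffOn ℝ 2 h PDisc)
    (hu : ContDiffOn ℝ 2 u PDisc) (hζ : ζ ∈ leftHalfPlane) :
    matrixEquivRealLinear (-Mθ h u a (Complex.exp ζ)) =
      verticalCoeff (u ∘ Complex.exp) (logForm h u a) ζ := by
  have hz : Complex.exp ζ ≠ 0 := Complex.exp_ne_zero ζ
  ext w
  rw [matrixEquivRealLinear_apply, verticalCoeff, realLin_apply, logForm, dz_comp_exp hh hζ,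
    dz_comp_exp hu hζ, dz_mul_self h hz, dz_mul_self u hz]
  apply Complex.ext
  · simp only [Mθ, ω11θ, ω11r, neg_mul, ω22r, neg_add_rev, ω22θ, Fin.isValue, Matrix.neg_apply,
      of_apply, cons_val', cons_val_zero, cons_val_fin_one, ofReal_neg, ofReal_div, ofReal_sub,
      ofReal_mul, ofReal_ofNat, cons_val_one, neg_neg, ofReal_add, add_re, neg_re, mul_re,
      div_ofNat_re, sub_re, ofReal_re, ofReal_im, sub_im, sub_self, mul_zero, sub_zero,
      div_ofNat_im, mul_im, zero_mul, add_zero, zero_div, add_im, neg_im, neg_zero, I_re, I_im,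
      mul_one, map_mul, conj_ofReal, map_add, map_div₀, map_sub, conj_I, mul_neg, sub_neg_eq_add,
      map_ofNat, zero_sub, one_mul, zero_add, conj_re, conj_im]
    ring
  · simp only [Mθ, ω11θ, ω11r, neg_mul, ω22r, neg_add_rev, ω22θ, Fin.isValue, Matrix.neg_apply,
      of_apply, cons_val', cons_val_zero, cons_val_fin_one, ofReal_neg, ofReal_div, ofReal_sub,
      ofReal_mul, ofReal_ofNat, cons_val_one, neg_neg, ofReal_add, add_im, neg_im, mul_im,
      div_ofNat_re, sub_re, mul_re, ofReal_re, ofReal_im, sub_im, sub_self, mul_zero, sub_zero,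
      div_ofNat_im, zero_mul, add_zero, zero_div, neg_zero, add_re, neg_re, I_im, mul_one, I_re,
      zero_add, map_mul, conj_ofReal, map_add, map_div₀, map_sub, conj_I, mul_neg, sub_neg_eq_add,
      map_ofNat, zero_sub, one_mul, conj_im, conj_re]
    ring

theorem exists_forall_norm_logForm_le (hh : ContDiffOn ℝ 2 h PDisc)
    (hu : ContDiffOn ℝ 2 u PDisc) (hG : ContinuousOn G (Metric.ball 0 1))
    (hord : ∀ z ∈ PDisc, (pdx h z : ℂ) - (pdy h z : ℂ) * I = z ^ N * G z)
    (hβN : β ≤ N) (hβa : a ≠ 0 → β ≤ -1)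
    (hlim : Tendsto (fun z => u z + (β : ℝ) * Real.log ‖z‖) (𝓝[PDisc] 0) (𝓝 c))
    {T : ℝ} (hT : T < 0) :
    ∃ C, ∀ ζ : ℂ, ζ.re ≤ T → ‖logForm h u a ζ‖ ≤ C * Real.exp ζ.re := by
  have hsub : Metric.closedBall (0 : ℂ) (Real.exp T) ⊆ Metric.ball 0 1 :=
    Metric.closedBall_subset_ball (Real.exp_lt_one_iff.2 hT)
  have hsub' : Metric.closedBall (0 : ℂ) (Real.exp T) \ {0} ⊆ PDisc := fun z hz =>
    PDisc_eq ▸ ⟨hz.2, hsub hz.1⟩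
  have hcompact : IsCompact (Metric.closedBall (0 : ℂ) (Real.exp T)) := isCompact_closedBall _ _
  obtain ⟨M, hM⟩ := hcompact.exists_bound_of_continuousOn (hG.mono hsub)
  have hcont : ContinuousOn (fun z => u z + (β : ℝ) * Real.log ‖z‖)
      (Metric.closedBall (0 : ℂ) (Real.exp T) \ {0}) :=
    (hu.continuousOn.mono hsub').add (continuousOn_const.mul
      (continuous_norm.continuousOn.log fun z hz => norm_ne_zero_iff.2 hz.2))
  obtain ⟨B, hB⟩ := exists_forall_norm_le_of_tendsto_nhdsNE hcompact hcont
    (nhdsWithin_PDisc_zero ▸ hlim)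
  refine ⟨Real.exp B * (M + |a|) / 2, fun ζ hζ => ?_⟩
  set z := Complex.exp ζ
  have hz : z ≠ 0 := Complex.exp_ne_zero ζ
  have hzT : z ∈ Metric.closedBall 0 (Real.exp T) := by simpa [z, Complex.norm_exp] using hζ
  have hdz : dz (h ∘ Complex.exp) ζ + I * a / 2 = (z ^ N * G z * z + I * a) / 2 := by
    rw [dz_comp_exp hh (hζ.trans_lt hT), dz, hord z (hsub' ⟨hzT, hz⟩)]
    ring
  calc ‖logForm h u a ζ‖ = Real.exp (u z) * ‖z ^ N * G z * z + I * a‖ / 2 := by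
        rw [logForm, hdz, norm_mul, norm_real, Real.norm_of_nonneg (Real.exp_nonneg _), norm_div,
          Complex.norm_two, mul_div_assoc]
    _ ≤ Real.exp B * ‖z‖ ^ (-β) * ‖z ^ N * G z * z + I * a‖ / 2 := by
        gcongr
        exact exp_le_mul_norm_zpow hz ((le_abs_self _).trans (hB z hzT hz))
    _ = Real.exp B * (‖z‖ ^ (-β) * ‖z ^ N * G z * z + I * a‖) / 2 := by ring
    _ ≤ Real.exp B * ((M + |a|) * ‖z‖) / 2 := by
        gcongr Real.exp B * ?_ / 2
        exact norm_zpow_mul_norm_add_le hz (mem_ball_zero_iff.1 (hsub hzT)).le (hM z hzT) hβN hβa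
    _ = Real.exp B * (M + |a|) / 2 * Real.exp ζ.re := by
        rw [Complex.norm_exp]
        ring

theorem tendsto_comp_exp_of_tendsto_nhdsWithin
    (hlim : Tendsto (fun z => u z + (β : ℝ) * Real.log ‖z‖) (𝓝[PDisc] 0) (𝓝 c)) :
    Tendsto (fun ζ => (u ∘ Complex.exp) ζ + β * ζ.re) (comap re atBot) (𝓝 c) := by
  rw [nhdsWithin_PDisc_zero] at hlim
  refine (hlim.comp tendsto_exp_comap_re_atBot_nhdsNE).congr fun ζ => ?_
  simp [Complex.norm_exp]

theorem isConicalPair_logForm (hh : ContDiffOn ℝ 2 h PDisc) (hu : ContDiffOn ℝ 2 u PDisc)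
    (hharm : ∀ z ∈ PDisc, lap h z = 0)
    (hpde : ∀ z ∈ PDisc, lap u z = ((pdx h z + a * z.im / ‖z‖ ^ 2) ^ 2 +
      (pdy h z - a * z.re / ‖z‖ ^ 2) ^ 2) * Real.exp (2 * u z))
    (hG : ContinuousOn G (Metric.ball 0 1))
    (hord : ∀ z ∈ PDisc, (pdx h z : ℂ) - (pdy h z : ℂ) * I = z ^ N * G z)
    (hβN : β ≤ N) (hβa : a ≠ 0 → β ≤ -1)
    (hlim : Tendsto (fun z => u z + (β : ℝ) * Real.log ‖z‖) (𝓝[PDisc] 0) (𝓝 c)) :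
    IsConicalPair (u ∘ Complex.exp) (logForm h u a) β where
  toIsSpecialPair := isSpecialPair_logForm hh hu hharm hpde
  periodic_potential ζ := congrArg u (exp_periodic ζ)
  periodic_form ζ := by
    have hdz := periodic_dz (U := h ∘ Complex.exp) (fun ζ => congrArg h (exp_periodic ζ)) ζ
    rw [logForm, exp_periodic, hdz, logForm]
  tendsto_potential := ⟨c, tendsto_comp_exp_of_tendsto_nhdsWithin hlim⟩
  norm_form_le _ hT := exists_forall_norm_logForm_le hh hu hG hord hβN hβa hlim hT

theorem isFundamentalSolution_matrixEquivRealLinear (hh : ContDiffOn ℝ 2 h PDisc)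
    (hu : ContDiffOn ℝ 2 u PDisc) {t : ℝ} (ht : t < 0) {Ψ : ℝ → Matrix (Fin 2) (Fin 2) ℝ}
    (hΨ₀ : Ψ 0 = 1) (hΨ : ∀ s : ℝ, ∀ i j, HasDerivAt (fun s => Ψ s i j)
      ((-Mθ h u a (Real.exp t * Complex.exp (s * I)) * Ψ s) i j) s) :
    IsFundamentalSolution
      (fun s : ℝ => verticalCoeff (u ∘ Complex.exp) (logForm h u a) (t + s * I))
      fun s => matrixEquivRealLinear (Ψ s) where
  map_zero := by rw [hΨ₀, map_one]
  hasDerivAt s := by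
    have hderiv := hasDerivAt_linearMap_matrix matrixEquivRealLinear.toLinearMap (hΨ s)
    rw [ofReal_exp, ← Complex.exp_add] at hderiv
    rw [← matrixEquivRealLinear_neg_Mθ a hh hu (add_mul_I_mem_leftHalfPlane ht s), ← map_mul]
    exact hderiv

end PuncturedDisc

theorem stmt16 (a : ℝ) (h u : ℂ → ℝ)
    (hh : ContDiffOn ℝ 2 h PDisc) (hu : ContDiffOn ℝ 2 u PDisc)
    (hharm : ∀ z ∈ PDisc, lap h z = 0)
    (hpde : ∀ z ∈ PDisc, lap u z
      = ((pdx h z + a * z.im / ‖z‖ ^ 2) ^ 2 + (pdy h z - a * z.re / ‖z‖ ^ 2) ^ 2)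
        * Real.exp (2 * u z))
    (N : ℤ) (G : ℂ → ℂ)
    (hGhol : DifferentiableOn ℂ G (Metric.ball (0 : ℂ) 1)) (hG0 : G 0 ≠ 0)
    (hord : ∀ z ∈ PDisc, (pdx h z : ℂ) - (pdy h z : ℂ) * Complex.I = z ^ N * G z)
    (n : ℤ) (hn : n = if a = 0 then N else min (-1) N)
    (β : ℤ) (hβ : β < n + 1) (c : ℝ)
    (hconical : Tendsto (fun z => u z + (β : ℝ) * Real.log ‖z‖) (𝓝[PDisc] 0) (𝓝 c))
    -- the parallel transport Φ_r along the circle of radius r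
    (Φ : ℝ → ℝ → Matrix (Fin 2) (Fin 2) ℝ)
    (hΦ0 : ∀ r ∈ Ioo (0 : ℝ) 1, Φ r 0 = 1)
    (hΦode : ∀ r ∈ Ioo (0 : ℝ) 1, ∀ s : ℝ, ∀ i j : Fin 2,
      HasDerivAt (fun s' => Φ r s' i j)
        ((-Mθ h u a ((r : ℂ) * Complex.exp ((s : ℝ) * Complex.I)) * Φ r s) i j) s) :
    ∀ r ∈ Ioo (0 : ℝ) 1,
      Φ r (2 * π) = ((-1 : ℝ) ^ β) • (1 : Matrix (Fin 2) (Fin 2) ℝ) := by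
  have hβN : β ≤ N := by
    split_ifs at hn <;> lia
  have hβa : a ≠ 0 → β ≤ -1 := fun ha => by
    rw [if_neg ha] at hn
    lia
  have hcone := isConicalPair_logForm hh hu hharm hpde hGhol.continuousOn hord hβN hβa hconical
  have hframe : ∀ t : ℝ, t < 0 → IsFundamentalSolution
      (fun s => verticalCoeff (u ∘ Complex.exp) (logForm h u a) (t + s * I))
      (fun s => matrixEquivRealLinear (Φ (Real.exp t) s)) := fun t ht =>
    have hr : Real.exp t ∈ Ioo 0 1 := ⟨Real.exp_pos t, Real.exp_lt_one_iff.2 ht⟩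
    isFundamentalSolution_matrixEquivRealLinear hh hu ht (hΦ0 _ hr) (hΦode _ hr)
  intro r hr
  have hmonodromy := hcone.monodromy_eq hframe (Real.log_neg hr.1 hr.2)
  rw [Real.exp_log hr.1] at hmonodromy
  apply matrixEquivRealLinear.injective
  rw [hmonodromy, map_smul, map_one]
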